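/- arXiv:1307.0629 — 7 statements merged into one kernel-verified Lean document; each statement's English description precedes it below -/
import Mathlib

section
/- Let n ≥ 1 and r > 0. Let R : [0,1] × [0,r] → Mat_n(ℝ) be continuously differentiable with R(s,t) symmetric for every (s,t), and let S : [0,1] × [0,r] → Mat_n(ℝ) be twice continuously differentiable such that for every s ∈ [0,1]: ∂ₜ²S(s,t) + R(s,t)·S(s,t) = 0 for all t ∈ [0,r], S(s,0) = Id, and S(s,r) = 0. Then ∂ₜS(1,0) − ∂ₜS(0,0) = ∫₀¹ ∫₀ʳ S(s,t)ᵀ · (∂ₛR(s,t)) · S(s,t) dt ds. -/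
/-!
The formula follows from a Wronskian identity between two parameters, which avoids the mixed
partials of `S`. For `s, s'` in `[0,1]` put `W(t) = S(s',t)ᵀ ∂ₜS(s,t) - ∂ₜS(s',t)ᵀ S(s,t)`. By the
Jacobi equation and the symmetry of `R`, `W' = S(s')ᵀ (R(s') - R(s)) S(s)`, while the boundary
conditions give `W(r) = 0` and `W(0) = ∂ₜS(s,0) - ∂ₜS(s',0)ᵀ`. Taking `s' = s` shows that
`∂ₜS(s,0)` is symmetric, hence
`∂ₜS(s',0) - ∂ₜS(s,0) = ∫₀ʳ S(s',t)ᵀ (R(s',t) - R(s,t)) S(s,t) dt` (`wronskian_integral`).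
Dividing by `s' - s` and letting `s' → s` under the integral sign
(`hasDerivWithinAt_integral_increment`) shows that `s ↦ ∂ₜS(s,0)` has derivative
`∫₀ʳ S(s,t)ᵀ ∂ₛR(s,t) S(s,t) dt`. This is continuous in `s`, so integrating over `[0,1]` gives the
claim.
-/

open Matrix MeasureTheory Set Topology Filter

lemma continuousOn_slice {f : ℝ → ℝ → ℝ} {r : ℝ}
    (hf : ContinuousOn (fun p : ℝ × ℝ => f p.1 p.2) (Icc 0 1 ×ˢ Icc 0 r))
    {s : ℝ} (hs : s ∈ Icc (0:ℝ) 1) : ContinuousOn (f s) (Icc 0 r) :=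
  hf.comp (f := fun t => (s, t)) (by fun_prop) (fun _ ht => ⟨hs, ht⟩)

lemma continuousOn_integral_slice {f : ℝ → ℝ → ℝ} {r : ℝ} (hr : 0 < r)
    (hf : ContinuousOn (fun p : ℝ × ℝ => f p.1 p.2) (Icc 0 1 ×ˢ Icc 0 r)) :
    ContinuousOn (fun s => ∫ t in (0:ℝ)..r, f s t) (Icc 0 1) := by
  -- Precomposing with the projections onto `[0,1]` and `[0,r]` extends `f` continuously to the plane.
  have hg : Continuous (Function.uncurry fun s t : ℝ =>
      f (projIcc 0 1 zero_le_one s) (projIcc 0 r hr.le t)) :=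
    hf.comp_continuous (f := fun p : ℝ × ℝ =>
        (((projIcc 0 1 zero_le_one p.1 : Icc (0:ℝ) 1) : ℝ),
          ((projIcc 0 r hr.le p.2 : Icc (0:ℝ) r) : ℝ)))
      (by
        have h1 := (continuous_projIcc (a := (0:ℝ)) (b := 1) (h := zero_le_one))
        have h2 := (continuous_projIcc (a := (0:ℝ)) (b := r) (h := hr.le))
        fun_prop)
      (fun p => ⟨Subtype.coe_prop _, Subtype.coe_prop _⟩)
  have hc := intervalIntegral.continuous_parametric_intervalIntegral_of_continuous'
    (μ := volume) hg 0 r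
  refine hc.continuousOn.congr fun s hs => ?_
  refine intervalIntegral.integral_congr fun t ht => ?_
  rw [uIcc_of_le hr.le] at ht
  simp only [projIcc_of_mem _ hs, projIcc_of_mem _ ht]

/-- Differentiation under the integral sign in which the factor `a`, only assumed continuous,
is not differentiated: the increment of `ρ` vanishes at the base point. -/
lemma hasDerivWithinAt_integral_increment {r : ℝ} (hr : 0 < r) {a ρ ρs : ℝ → ℝ → ℝ} {b : ℝ → ℝ}
    (ha : ContinuousOn (fun p : ℝ × ℝ => a p.1 p.2) (Icc 0 1 ×ˢ Icc 0 r))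
    (hb : ContinuousOn b (Icc 0 r))
    (hρ : ContinuousOn (fun p : ℝ × ℝ => ρ p.1 p.2) (Icc 0 1 ×ˢ Icc 0 r))
    (hρs : ContinuousOn (fun p : ℝ × ℝ => ρs p.1 p.2) (Icc 0 1 ×ˢ Icc 0 r))
    (hd : ∀ s ∈ Icc (0:ℝ) 1, ∀ t ∈ Icc (0:ℝ) r,
      HasDerivWithinAt (fun σ => ρ σ t) (ρs s t) (Icc 0 1) s)
    {s : ℝ} (hs : s ∈ Icc (0:ℝ) 1) :
    HasDerivWithinAt (fun σ => ∫ t in (0:ℝ)..r, a σ t * (ρ σ t - ρ s t) * b t)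
      (∫ t in (0:ℝ)..r, a s t * ρs s t * b t) (Icc 0 1) s := by
  have hK : IsCompact (Icc (0:ℝ) 1 ×ˢ Icc (0:ℝ) r) := isCompact_Icc.prod isCompact_Icc
  obtain ⟨A, hA⟩ := hK.exists_bound_of_continuousOn ha
  obtain ⟨L, hL⟩ := hK.exists_bound_of_continuousOn hρs
  obtain ⟨B, hB⟩ := isCompact_Icc.exists_bound_of_continuousOn hb
  have hsub : uIoc (0:ℝ) r ⊆ Icc 0 r := by
    rw [uIoc_of_le hr.le]; exact Ioc_subset_Icc_self
  have h0 : (0:ℝ) ∈ Icc 0 r := ⟨le_rfl, hr.le⟩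
  have hA0 : 0 ≤ A := (norm_nonneg _).trans (hA (s, 0) ⟨hs, h0⟩)
  have hL0 : 0 ≤ L := (norm_nonneg _).trans (hL (s, 0) ⟨hs, h0⟩)
  rw [hasDerivWithinAt_iff_tendsto_slope]
  have hmem : ∀ᶠ σ in 𝓝[Icc (0:ℝ) 1 \ {s}] s, σ ∈ Icc (0:ℝ) 1 \ {s} := self_mem_nhdsWithin
  have key : Tendsto (fun σ => ∫ t in (0:ℝ)..r, a σ t * slope (fun τ => ρ τ t) s σ * b t)
      (𝓝[Icc (0:ℝ) 1 \ {s}] s) (𝓝 (∫ t in (0:ℝ)..r, a s t * ρs s t * b t)) := by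
    refine intervalIntegral.tendsto_integral_filter_of_dominated_convergence
      (fun _ => A * L * B) ?_ ?_ (by simp) ?_
    · filter_upwards [hmem] with σ hσ
      have hc : ContinuousOn (fun t => a σ t * slope (fun τ => ρ τ t) s σ * b t) (Icc 0 r) := by
        have h1 := continuousOn_slice ha hσ.1
        have h2 := continuousOn_slice hρ hσ.1
        have h3 := continuousOn_slice hρ hs
        simp only [slope_def_field]
        exact (h1.mul ((h2.sub h3).div_const _)).mul hb
      exact (hc.mono hsub).aestronglyMeasurable measurableSet_uIoc
    · filter_upwards [hmem] with σ hσ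
      refine Eventually.of_forall fun t ht => ?_
      have ht' := hsub ht
      have hslope : ‖slope (fun τ => ρ τ t) s σ‖ ≤ L := by
        have := Convex.norm_image_sub_le_of_norm_hasDerivWithin_le
          (fun x hx => hd x hx t ht') (fun x hx => hL (x, t) ⟨hx, ht'⟩)
          (convex_Icc (0:ℝ) 1) hs hσ.1
        have hne : 0 < ‖σ - s‖ := norm_pos_iff.2 (sub_ne_zero.2 hσ.2)
        rw [slope_def_field, norm_div]
        exact (div_le_iff₀ hne).2 this
      rw [norm_mul, norm_mul]
      have h1 := hA (σ, t) ⟨hσ.1, ht'⟩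
      have h2 := hB t ht'
      simp only at h1
      gcongr
    · refine Eventually.of_forall fun t ht => ?_
      have ht' := hsub ht
      have h1 : Tendsto (fun σ => a σ t) (𝓝[Icc (0:ℝ) 1 \ {s}] s) (𝓝 (a s t)) := by
        have : ContinuousOn (fun σ => a σ t) (Icc 0 1) :=
          ha.comp (f := fun σ => (σ, t)) (by fun_prop) (fun _ h => ⟨h, ht'⟩)
        exact (this s hs).mono_left (nhdsWithin_mono _ sdiff_subset)
      exact (h1.mul (hasDerivWithinAt_iff_tendsto_slope.1 (hd s hs t ht'))).mul_const _
  refine key.congr fun σ => ?_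
  simp only [slope_def_field, sub_self, mul_zero, zero_mul, intervalIntegral.integral_zero,
    sub_zero]
  rw [← intervalIntegral.integral_div]
  exact intervalIntegral.integral_congr fun t _ => by ring

/-- Integrated Wronskian of two solutions `U`, `V` of Jacobi equations with symmetric potentials
`Q`, `P` and with the same boundary conditions. -/
lemma wronskian_integral {n : ℕ} {r : ℝ} (hr : 0 < r)
    {P Q U Ut Utt V Vt Vtt : ℝ → Matrix (Fin n) (Fin n) ℝ}
    (hPc : ∀ i j, ContinuousOn (fun t => P t i j) (Icc 0 r))
    (hQc : ∀ i j, ContinuousOn (fun t => Q t i j) (Icc 0 r))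
    (hQs : ∀ t ∈ Icc (0:ℝ) r, (Q t).IsSymm)
    (hU : ∀ t ∈ Icc (0:ℝ) r, ∀ i j, HasDerivWithinAt (fun τ => U τ i j) (Ut t i j) (Icc 0 r) t)
    (hUt : ∀ t ∈ Icc (0:ℝ) r, ∀ i j, HasDerivWithinAt (fun τ => Ut τ i j) (Utt t i j) (Icc 0 r) t)
    (hV : ∀ t ∈ Icc (0:ℝ) r, ∀ i j, HasDerivWithinAt (fun τ => V τ i j) (Vt t i j) (Icc 0 r) t)
    (hVt : ∀ t ∈ Icc (0:ℝ) r, ∀ i j, HasDerivWithinAt (fun τ => Vt τ i j) (Vtt t i j) (Icc 0 r) t)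
    (hUJ : ∀ t ∈ Icc (0:ℝ) r, Utt t + Q t * U t = 0)
    (hVJ : ∀ t ∈ Icc (0:ℝ) r, Vtt t + P t * V t = 0)
    (hU0 : U 0 = 1) (hV0 : V 0 = 1) (hUr : U r = 0) (hVr : V r = 0) (i j : Fin n) :
    Ut 0 j i - Vt 0 i j
      = ∑ k, ∑ l, ∫ t in (0:ℝ)..r, U t k i * (Q t k l - P t k l) * V t l j := by
  have hUc : ∀ i j, ContinuousOn (fun t => U t i j) (Icc 0 r) :=
    fun i j t ht => (hU t ht i j).continuousWithinAt
  have hVc : ∀ i j, ContinuousOn (fun t => V t i j) (Icc 0 r) :=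
    fun i j t ht => (hV t ht i j).continuousWithinAt
  have hterm : ∀ k l, ContinuousOn (fun t => U t k i * (Q t k l - P t k l) * V t l j) (Icc 0 r) :=
    fun k l => ((hUc k i).mul ((hQc k l).sub (hPc k l))).mul (hVc l j)
  have hint : ∀ k l, IntervalIntegrable (fun t => U t k i * (Q t k l - P t k l) * V t l j)
      volume 0 r := fun k l => (hterm k l).intervalIntegrable_of_Icc hr.le
  have hderiv : ∀ t ∈ Icc (0:ℝ) r,
      HasDerivWithinAt (fun τ => ∑ k, (U τ k i * Vt τ k j - Ut τ k i * V τ k j))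
        (∑ k, ∑ l, U t k i * (Q t k l - P t k l) * V t l j) (Icc 0 r) t := by
    intro t ht
    have h := HasDerivWithinAt.fun_sum (u := Finset.univ) fun k _ =>
      ((hU t ht k i).mul (hVt t ht k j)).sub ((hUt t ht k i).mul (hV t ht k j))
    refine h.congr_deriv ?_
    have e1 : ∀ k, Utt t k i = -∑ l, Q t k l * U t l i := fun k => by
      have := congrFun (congrFun (hUJ t ht) k) i
      simp only [Matrix.add_apply, mul_apply, Matrix.zero_apply] at this
      linarith
    have e2 : ∀ k, Vtt t k j = -∑ l, P t k l * V t l j := fun k => by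
      have := congrFun (congrFun (hVJ t ht) k) j
      simp only [Matrix.add_apply, mul_apply, Matrix.zero_apply] at this
      linarith
    have e3 : ∑ k, (∑ l, Q t k l * U t l i) * V t k j = ∑ k, ∑ l, U t k i * Q t k l * V t l j := by
      simp only [Finset.sum_mul]
      rw [Finset.sum_comm]
      refine Finset.sum_congr rfl fun k _ => Finset.sum_congr rfl fun l _ => ?_
      rw [(hQs t ht).apply k l]; ring
    have e4 : ∑ k, U t k i * ∑ l, P t k l * V t l j = ∑ k, ∑ l, U t k i * P t k l * V t l j := by
      simp only [Finset.mul_sum, mul_assoc]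
    calc _ = ∑ k, (∑ l, Q t k l * U t l i) * V t k j - ∑ k, U t k i * ∑ l, P t k l * V t l j := by
          rw [← Finset.sum_sub_distrib]
          refine Finset.sum_congr rfl fun k _ => ?_
          rw [e1, e2]; ring
      _ = _ := by
          rw [e3, e4]
          simp only [← Finset.sum_sub_distrib]
          exact Finset.sum_congr rfl fun k _ => Finset.sum_congr rfl fun l _ => by ring
  have hftc := intervalIntegral.integral_eq_sub_of_hasDerivAt_of_le hr.le
    (fun t ht => (hderiv t ht).continuousWithinAt)
    (fun t ht => (hderiv t (Ioo_subset_Icc_self ht)).hasDerivAt (Icc_mem_nhds ht.1 ht.2))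
    ((continuousOn_finsetSum _ fun k _ => continuousOn_finsetSum _ fun l _ =>
      hterm k l).intervalIntegrable_of_Icc hr.le)
  rw [intervalIntegral.integral_finsetSum
    (fun k _ => (continuousOn_finsetSum _ fun l _ =>
      hterm k l).intervalIntegrable_of_Icc hr.le)] at hftc
  simp only [intervalIntegral.integral_finsetSum (fun l _ => hint _ l)] at hftc
  rw [hftc]
  simp [hU0, hV0, hUr, hVr, one_apply, Finset.sum_sub_distrib]

/-- Hopf-type formula (stable case, matrix form).
If `S(s,·)` solves the matrix Jacobi equation `∂ₜ²S + R·S = 0` on `[0,r]` with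
`S(s,0) = Id`, `S(s,r) = 0`, where `R` is C¹ and symmetric and `S` is C² on
`[0,1] × [0,r]`, then
`∂ₜS(1,0) − ∂ₜS(0,0) = ∫₀¹ ∫₀ʳ S(s,t)ᵀ · (∂ₛR(s,t)) · S(s,t) dt ds`
(entrywise). -/
theorem hopf_formula_stable (n : ℕ) (hn : 1 ≤ n) (r : ℝ) (hr : 0 < r)
    (R S St Stt Rs : ℝ → ℝ → Matrix (Fin n) (Fin n) ℝ)
    -- R is continuously differentiable on [0,1] × [0,r], with s-partial Rs
    (hR_cd : ∀ i j, ContDiffOn ℝ 1 (fun p : ℝ × ℝ => R p.1 p.2 i j)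
      (Icc 0 1 ×ˢ Icc 0 r))
    (hRs : ∀ s ∈ Icc (0:ℝ) 1, ∀ t ∈ Icc (0:ℝ) r, ∀ i j,
      HasDerivWithinAt (fun σ => R σ t i j) (Rs s t i j) (Icc 0 1) s)
    (hRs_cont : ∀ i j, ContinuousOn (fun p : ℝ × ℝ => Rs p.1 p.2 i j)
      (Icc 0 1 ×ˢ Icc 0 r))
    -- R(s,t) is symmetric
    (hR_symm : ∀ s ∈ Icc (0:ℝ) 1, ∀ t ∈ Icc (0:ℝ) r, (R s t).IsSymm)
    -- S is twice continuously differentiable on [0,1] × [0,r],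
    -- with first and second t-partials St and Stt
    (hS_cd : ∀ i j, ContDiffOn ℝ 2 (fun p : ℝ × ℝ => S p.1 p.2 i j)
      (Icc 0 1 ×ˢ Icc 0 r))
    (hSt : ∀ s ∈ Icc (0:ℝ) 1, ∀ t ∈ Icc (0:ℝ) r, ∀ i j,
      HasDerivWithinAt (fun τ => S s τ i j) (St s t i j) (Icc 0 r) t)
    (hStt : ∀ s ∈ Icc (0:ℝ) 1, ∀ t ∈ Icc (0:ℝ) r, ∀ i j,
      HasDerivWithinAt (fun τ => St s τ i j) (Stt s t i j) (Icc 0 r) t)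
    -- the Jacobi equation and the boundary conditions
    (hJac : ∀ s ∈ Icc (0:ℝ) 1, ∀ t ∈ Icc (0:ℝ) r, Stt s t + R s t * S s t = 0)
    (hS0 : ∀ s ∈ Icc (0:ℝ) 1, S s 0 = 1)
    (hSr : ∀ s ∈ Icc (0:ℝ) 1, S s r = 0) :
    ∀ i j, (St 1 0 - St 0 0) i j
      = ∫ s in (0:ℝ)..1, ∫ t in (0:ℝ)..r, ((S s t)ᵀ * Rs s t * S s t) i j := by
  have hSc : ∀ i j, ContinuousOn (fun p : ℝ × ℝ => S p.1 p.2 i j) (Icc 0 1 ×ˢ Icc 0 r) :=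
    fun i j => (hS_cd i j).continuousOn
  have hRc : ∀ i j, ContinuousOn (fun p : ℝ × ℝ => R p.1 p.2 i j) (Icc 0 1 ×ˢ Icc 0 r) :=
    fun i j => (hR_cd i j).continuousOn
  have hW : ∀ s ∈ Icc (0:ℝ) 1, ∀ s' ∈ Icc (0:ℝ) 1, ∀ i j, St s' 0 j i - St s 0 i j
      = ∑ k, ∑ l, ∫ t in (0:ℝ)..r, S s' t k i * (R s' t k l - R s t k l) * S s t l j :=
    fun s hs s' hs' i j => wronskian_integral hr
      (fun i j => continuousOn_slice (f := fun s t => R s t i j) (hRc i j) hs)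
      (fun i j => continuousOn_slice (f := fun s t => R s t i j) (hRc i j) hs')
      (hR_symm s' hs') (hSt s' hs') (hStt s' hs') (hSt s hs) (hStt s hs) (hJac s' hs') (hJac s hs)
      (hS0 s' hs') (hS0 s hs) (hSr s' hs') (hSr s hs) i j
  have hsymm : ∀ s ∈ Icc (0:ℝ) 1, ∀ i j, St s 0 j i = St s 0 i j := fun s hs i j => by
    have := hW s hs s hs i j
    simp only [sub_self, mul_zero, zero_mul, intervalIntegral.integral_zero,
      Finset.sum_const_zero] at this
    linarith
  intro i j
  have hderiv : ∀ s ∈ Icc (0:ℝ) 1, HasDerivWithinAt (fun σ => St σ 0 i j)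
      (∑ k, ∑ l, ∫ t in (0:ℝ)..r, S s t k i * Rs s t k l * S s t l j) (Icc 0 1) s := by
    intro s hs
    have h := HasDerivWithinAt.fun_sum (u := Finset.univ) fun k _ =>
      HasDerivWithinAt.fun_sum (u := Finset.univ) fun l _ =>
        hasDerivWithinAt_integral_increment hr (a := fun s t => S s t k i)
          (ρ := fun s t => R s t k l) (ρs := fun s t => Rs s t k l) (b := fun t => S s t l j)
          (hSc k i) (continuousOn_slice (f := fun s t => S s t l j) (hSc l j) hs)
          (hRc k l) (hRs_cont k l) (fun s hs t ht => hRs s hs t ht k l) hs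
    have h' := h.const_add (St s 0 i j)
    refine h'.congr_of_mem (fun σ hσ => ?_) hs
    rw [← hW s hs σ hσ i j, hsymm σ hσ i j]
    ring
  have hcont : ∀ k l, ContinuousOn
      (fun p : ℝ × ℝ => S p.1 p.2 k i * Rs p.1 p.2 k l * S p.1 p.2 l j)
      (Icc 0 1 ×ˢ Icc 0 r) :=
    fun k l => ((hSc k i).mul (hRs_cont k l)).mul (hSc l j)
  have hftc := intervalIntegral.integral_eq_sub_of_hasDerivAt_of_le zero_le_one
    (fun s hs => (hderiv s hs).continuousWithinAt)
    (fun s hs => (hderiv s (Ioo_subset_Icc_self hs)).hasDerivAt (Icc_mem_nhds hs.1 hs.2))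
    ((continuousOn_finsetSum _ fun k _ => continuousOn_finsetSum _ fun l _ =>
      continuousOn_integral_slice (f := fun s t => S s t k i * Rs s t k l * S s t l j) hr
        (hcont k l)).intervalIntegrable_of_Icc zero_le_one)
  rw [Matrix.sub_apply, ← hftc]
  refine intervalIntegral.integral_congr fun s hs => ?_
  rw [uIcc_of_le zero_le_one] at hs
  have hterm : ∀ k l, ContinuousOn (fun t => S s t k i * Rs s t k l * S s t l j) (Icc 0 r) :=
    fun k l => continuousOn_slice (f := fun s t => S s t k i * Rs s t k l * S s t l j)
      (hcont k l) hs
  have hint : ∀ k l, IntervalIntegrable (fun t => S s t k i * Rs s t k l * S s t l j)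
      volume 0 r := fun k l => (hterm k l).intervalIntegrable_of_Icc hr.le
  simp only [← intervalIntegral.integral_finsetSum (fun l _ => hint _ l)]
  rw [← intervalIntegral.integral_finsetSum
    (fun k _ => (continuousOn_finsetSum _ fun l _ =>
      hterm k l).intervalIntegrable_of_Icc hr.le)]
  refine intervalIntegral.integral_congr fun t _ => ?_
  simp only [mul_apply, transpose_apply, Finset.sum_mul]
  exact Finset.sum_comm
end

section
/- Let n ≥ 1 and r > 0. Let R : [0,1] × [−r,0] → Mat_n(ℝ) be continuously differentiable with R(s,t) symmetric for every (s,t), and let U : [0,1] × [−r,0] → Mat_n(ℝ) be twice continuously differentiable such that for every s ∈ [0,1]: ∂ₜ²U(s,t) + R(s,t)·U(s,t) = 0 for all t ∈ [−r,0], U(s,0) = Id, and U(s,−r) = 0. Then ∂ₜU(1,0) − ∂ₜU(0,0) = − ∫₀¹ ∫_{−r}⁰ U(s,t)ᵀ · (∂ₛR(s,t)) · U(s,t) dt ds. -/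
/-!
For two parameters `s, σ`, the Wronskian `W(t) = U(s,t)ᵀ ∂ₜU(σ,t) - ∂ₜU(s,t)ᵀ U(σ,t)` has derivative
`-U(s,t)ᵀ (R(σ,t) - R(s,t)) U(σ,t)`, by the Jacobi equation and the symmetry of `R`. It vanishes at
`t = -r`, and at `t = 0` it equals `∂ₜU(σ,0) - ∂ₜU(s,0)ᵀ`. The case `σ = s` shows that `∂ₜU(s,0)` is
symmetric, so
`∂ₜU(σ,0) - ∂ₜU(s,0) = -∫ U(s,t)ᵀ (R(σ,t) - R(s,t)) U(σ,t) dt` (`wronskian_identity`).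
Dividing by `σ - s` and letting `σ → s` under the integral sign (`tendsto_integral_slope`) gives
`∂ₛ∂ₜU(s,0) = -∫ U(s,t)ᵀ ∂ₛR(s,t) U(s,t) dt`, which is continuous in `s`; integrating over `[0,1]`
gives the formula. Comparing two parameters, instead of differentiating the Jacobi equation in `s`,
avoids the third-order derivative `∂ₛ∂ₜ²U`.
-/

open Matrix MeasureTheory Set
open Filter Topology intervalIntegral

/-- The fibre `{s} × [a,b]` of a function continuous on `[0,1] × [a,b]` is continuous. -/
lemma continuousOn_fibre {f : ℝ → ℝ → ℝ} {a b s : ℝ} (hs : s ∈ Icc (0:ℝ) 1)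
    (hf : ContinuousOn (fun p : ℝ × ℝ => f p.1 p.2) (Icc 0 1 ×ˢ Icc a b)) :
    ContinuousOn (fun t => f s t) (Icc a b) :=
  hf.comp (f := fun t => (s, t)) (by fun_prop) fun _ ht => ⟨hs, ht⟩

/-- As above, for the fibre `[0,1] × {t}`. -/
lemma continuousOn_fibre' {f : ℝ → ℝ → ℝ} {a b t : ℝ} (ht : t ∈ Icc a b)
    (hf : ContinuousOn (fun p : ℝ × ℝ => f p.1 p.2) (Icc 0 1 ×ˢ Icc a b)) :
    ContinuousOn (fun s => f s t) (Icc (0:ℝ) 1) :=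
  hf.comp (f := fun s => (s, t)) (by fun_prop) fun _ hs => ⟨hs, ht⟩

lemma exists_bound_rect {f : ℝ → ℝ → ℝ} {a b : ℝ}
    (hf : ContinuousOn (fun p : ℝ × ℝ => f p.1 p.2) (Icc 0 1 ×ˢ Icc a b)) :
    ∃ C, 0 ≤ C ∧ ∀ s ∈ Icc (0:ℝ) 1, ∀ t ∈ Icc a b, ‖f s t‖ ≤ C := by
  obtain ⟨C, hC⟩ := (isCompact_Icc.prod isCompact_Icc).exists_bound_of_continuousOn hf
  exact ⟨max C 0, le_max_right _ _, fun s hs t ht => (hC (s, t) ⟨hs, ht⟩).trans (le_max_left _ _)⟩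

lemma continuousOn_integral_rect {f : ℝ → ℝ → ℝ} {a b : ℝ} (hab : a ≤ b)
    (hf : ContinuousOn (fun p : ℝ × ℝ => f p.1 p.2) (Icc 0 1 ×ˢ Icc a b)) :
    ContinuousOn (fun s => ∫ t in a..b, f s t) (Icc (0:ℝ) 1) := by
  obtain ⟨C, -, hC⟩ := exists_bound_rect hf
  intro s hs
  refine continuousWithinAt_of_dominated_interval (bound := fun _ => C) ?_ ?_ (by simp) ?_
  · filter_upwards [self_mem_nhdsWithin] with σ hσ
    exact ((continuousOn_fibre hσ hf).mono (uIoc_of_le hab ▸ Ioc_subset_Icc_self)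
      ).aestronglyMeasurable measurableSet_uIoc
  · filter_upwards [self_mem_nhdsWithin] with σ hσ
    refine Eventually.of_forall fun t ht => ?_
    rw [uIoc_of_le hab] at ht
    exact hC σ hσ t (Ioc_subset_Icc_self ht)
  · refine Eventually.of_forall fun t ht => ?_
    rw [uIoc_of_le hab] at ht
    exact continuousOn_fibre' (Ioc_subset_Icc_self ht) hf s hs

/-- Differentiation under the integral sign for one entry of `Uᵀ (R(σ) - R(s)) U / (σ - s)`.
The difference quotients are dominated by the mean value inequality. -/
lemma tendsto_integral_slope {u v ρ ρs : ℝ → ℝ → ℝ} {a b s : ℝ} (hab : a ≤ b)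
    (hs : s ∈ Icc (0:ℝ) 1)
    (hu : ContinuousOn (fun p : ℝ × ℝ => u p.1 p.2) (Icc 0 1 ×ˢ Icc a b))
    (hv : ContinuousOn (fun p : ℝ × ℝ => v p.1 p.2) (Icc 0 1 ×ˢ Icc a b))
    (hρ : ContinuousOn (fun p : ℝ × ℝ => ρ p.1 p.2) (Icc 0 1 ×ˢ Icc a b))
    (hρs : ContinuousOn (fun p : ℝ × ℝ => ρs p.1 p.2) (Icc 0 1 ×ˢ Icc a b))
    (hd : ∀ s ∈ Icc (0:ℝ) 1, ∀ t ∈ Icc a b,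
      HasDerivWithinAt (fun σ => ρ σ t) (ρs s t) (Icc 0 1) s) :
    Tendsto (fun σ => ∫ t in a..b, u s t * ((σ - s)⁻¹ * (ρ σ t - ρ s t)) * v σ t)
      (𝓝[Icc 0 1 \ {s}] s) (𝓝 (∫ t in a..b, u s t * ρs s t * v s t)) := by
  obtain ⟨A, hA0, hA⟩ := exists_bound_rect hu
  obtain ⟨B, hB0, hB⟩ := exists_bound_rect hv
  obtain ⟨C, hC0, hC⟩ := exists_bound_rect hρs
  refine tendsto_integral_filter_of_dominated_convergence (fun _ => A * C * B) ?_ ?_ (by simp) ?_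
  · filter_upwards [self_mem_nhdsWithin] with σ hσ
    refine ContinuousOn.aestronglyMeasurable ?_ measurableSet_uIoc
    refine ContinuousOn.mono ?_ (uIoc_of_le hab ▸ Ioc_subset_Icc_self)
    have h1 := continuousOn_fibre hs hu
    have h2 := continuousOn_fibre hσ.1 hρ
    have h3 := continuousOn_fibre hs hρ
    have h4 := continuousOn_fibre hσ.1 hv
    fun_prop
  · filter_upwards [self_mem_nhdsWithin] with σ hσ
    refine Eventually.of_forall fun t ht => ?_
    rw [uIoc_of_le hab] at ht
    replace ht := Ioc_subset_Icc_self ht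
    have hmv : ‖ρ σ t - ρ s t‖ ≤ C * ‖σ - s‖ :=
      (convex_Icc (0:ℝ) 1).norm_image_sub_le_of_norm_hasDerivWithin_le
        (fun x hx => hd x hx t ht) (fun x hx => hC x hx t ht) hs hσ.1
    have hpos : 0 < ‖σ - s‖ := norm_pos_iff.2 (sub_ne_zero.2 hσ.2)
    have hq : ‖(σ - s)⁻¹ * (ρ σ t - ρ s t)‖ ≤ C := by
      rw [norm_mul, norm_inv, inv_mul_le_iff₀ hpos, mul_comm]
      exact hmv
    rw [norm_mul, norm_mul]
    gcongr
    · exact hA s hs t ht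
    · exact hB σ hσ.1 t ht
  · refine Eventually.of_forall fun t ht => ?_
    rw [uIoc_of_le hab] at ht
    replace ht := Ioc_subset_Icc_self ht
    have h1 := hasDerivWithinAt_iff_tendsto_slope.1 (hd s hs t ht)
    have h2 : Tendsto (fun σ => v σ t) (𝓝[Icc 0 1 \ {s}] s) (𝓝 (v s t)) :=
      (continuousOn_fibre' ht hv s hs).mono_left (nhdsWithin_mono _ sdiff_subset)
    exact (h1.const_mul (u s t)).mul h2

/-- The integrated Wronskian identity for the parameters `s` and `σ`, written entrywise. Here `X`
and `Y` stand for `U(s,·)` and `U(σ,·)`, with potentials `P = R(s,·)` and `Q = R(σ,·)`. -/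
lemma wronskian_identity {n : ℕ} {r : ℝ} (hr : 0 < r)
    {X X' X'' Y Y' Y'' P Q : ℝ → Matrix (Fin n) (Fin n) ℝ}
    (hX : ∀ t ∈ Icc (-r) 0, ∀ i j, HasDerivWithinAt (fun τ => X τ i j) (X' t i j) (Icc (-r) 0) t)
    (hX' : ∀ t ∈ Icc (-r) 0, ∀ i j, HasDerivWithinAt (fun τ => X' τ i j) (X'' t i j) (Icc (-r) 0) t)
    (hY : ∀ t ∈ Icc (-r) 0, ∀ i j, HasDerivWithinAt (fun τ => Y τ i j) (Y' t i j) (Icc (-r) 0) t)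
    (hY' : ∀ t ∈ Icc (-r) 0, ∀ i j, HasDerivWithinAt (fun τ => Y' τ i j) (Y'' t i j) (Icc (-r) 0) t)
    (hP : ∀ i j, ContinuousOn (fun t => P t i j) (Icc (-r) 0))
    (hQ : ∀ i j, ContinuousOn (fun t => Q t i j) (Icc (-r) 0))
    (hPs : ∀ t ∈ Icc (-r) 0, (P t).IsSymm)
    (hJX : ∀ t ∈ Icc (-r) 0, X'' t + P t * X t = 0)
    (hJY : ∀ t ∈ Icc (-r) 0, Y'' t + Q t * Y t = 0)
    (hX0 : X 0 = 1) (hY0 : Y 0 = 1) (hXr : X (-r) = 0) (hYr : Y (-r) = 0) (i j : Fin n) :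
    Y' 0 i j - X' 0 j i
      = -∫ t in (-r)..0, ((X t)ᵀ * (Q t - P t) * Y t) i j := by
  have hder : ∀ t ∈ Icc (-r) 0, HasDerivWithinAt
      (fun t => ((X t)ᵀ * Y' t - (X' t)ᵀ * Y t) i j)
      (-((X t)ᵀ * (Q t - P t) * Y t) i j) (Icc (-r) 0) t := by
    intro t ht
    have hval : -((X t)ᵀ * (Q t - P t) * Y t) i j
        = ∑ k, ((X' t k i * Y' t k j + X t k i * Y'' t k j)
            - (X'' t k i * Y t k j + X' t k i * Y' t k j)) := by
      have hm : -((X t)ᵀ * (Q t - P t) * Y t) = (X t)ᵀ * Y'' t - (X'' t)ᵀ * Y t := by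
        rw [eq_neg_of_add_eq_zero_left (hJX t ht), eq_neg_of_add_eq_zero_left (hJY t ht),
          transpose_neg, transpose_mul, (hPs t ht).eq]
        noncomm_ring
      rw [← Matrix.neg_apply, hm]
      simp only [Matrix.sub_apply, mul_apply, transpose_apply, ← Finset.sum_sub_distrib]
      exact Finset.sum_congr rfl fun k _ => by ring
    rw [hval]
    simp only [Matrix.sub_apply, mul_apply, transpose_apply, ← Finset.sum_sub_distrib]
    exact HasDerivWithinAt.fun_sum fun k _ =>
      ((hX t ht k i).mul (hY' t ht k j)).sub ((hX' t ht k i).mul (hY t ht k j))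
  have hcont : ContinuousOn (fun t => -((X t)ᵀ * (Q t - P t) * Y t) i j) (Icc (-r) 0) := by
    have h1 : ∀ i j, ContinuousOn (fun t => X t i j) (Icc (-r) 0) :=
      fun i j t ht => (hX t ht i j).continuousWithinAt
    have h2 : ∀ i j, ContinuousOn (fun t => Y t i j) (Icc (-r) 0) :=
      fun i j t ht => (hY t ht i j).continuousWithinAt
    simp only [mul_apply, transpose_apply, Matrix.sub_apply]
    fun_prop
  have hle : -r ≤ 0 := by linarith
  have hftc := integral_eq_sub_of_hasDerivAt_of_le hle
    (fun t ht => (hder t ht).continuousWithinAt)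
    (fun t ht => (hder t (Ioo_subset_Icc_self ht)).hasDerivAt (Icc_mem_nhds ht.1 ht.2))
    (hcont.intervalIntegrable_of_Icc hle)
  rw [intervalIntegral.integral_neg] at hftc
  rw [hftc]
  simp [hX0, hY0, hXr, hYr]

/-- Hopf-type formula (unstable case, matrix form).
If `U(s,·)` solves the matrix Jacobi equation `∂ₜ²U + R·U = 0` on `[−r,0]` with
`U(s,0) = Id`, `U(s,−r) = 0`, where `R` is C¹ and symmetric and `U` is C² on
`[0,1] × [−r,0]`, then
`∂ₜU(1,0) − ∂ₜU(0,0) = − ∫₀¹ ∫_{−r}⁰ U(s,t)ᵀ · (∂ₛR(s,t)) · U(s,t) dt ds`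
(entrywise). -/
theorem hopf_formula_unstable (n : ℕ) (hn : 1 ≤ n) (r : ℝ) (hr : 0 < r)
    (R U Ut Utt Rs : ℝ → ℝ → Matrix (Fin n) (Fin n) ℝ)
    -- R is continuously differentiable on [0,1] × [−r,0], with s-partial Rs
    (hR_cd : ∀ i j, ContDiffOn ℝ 1 (fun p : ℝ × ℝ => R p.1 p.2 i j)
      (Icc 0 1 ×ˢ Icc (-r) 0))
    (hRs : ∀ s ∈ Icc (0:ℝ) 1, ∀ t ∈ Icc (-r) (0:ℝ), ∀ i j,
      HasDerivWithinAt (fun σ => R σ t i j) (Rs s t i j) (Icc 0 1) s)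
    (hRs_cont : ∀ i j, ContinuousOn (fun p : ℝ × ℝ => Rs p.1 p.2 i j)
      (Icc 0 1 ×ˢ Icc (-r) 0))
    -- R(s,t) is symmetric
    (hR_symm : ∀ s ∈ Icc (0:ℝ) 1, ∀ t ∈ Icc (-r) (0:ℝ), (R s t).IsSymm)
    -- U is twice continuously differentiable on [0,1] × [−r,0],
    -- with first and second t-partials Ut and Utt
    (hU_cd : ∀ i j, ContDiffOn ℝ 2 (fun p : ℝ × ℝ => U p.1 p.2 i j)
      (Icc 0 1 ×ˢ Icc (-r) 0))
    (hUt : ∀ s ∈ Icc (0:ℝ) 1, ∀ t ∈ Icc (-r) (0:ℝ), ∀ i j,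
      HasDerivWithinAt (fun τ => U s τ i j) (Ut s t i j) (Icc (-r) 0) t)
    (hUtt : ∀ s ∈ Icc (0:ℝ) 1, ∀ t ∈ Icc (-r) (0:ℝ), ∀ i j,
      HasDerivWithinAt (fun τ => Ut s τ i j) (Utt s t i j) (Icc (-r) 0) t)
    -- the Jacobi equation and the boundary conditions
    (hJac : ∀ s ∈ Icc (0:ℝ) 1, ∀ t ∈ Icc (-r) (0:ℝ), Utt s t + R s t * U s t = 0)
    (hU0 : ∀ s ∈ Icc (0:ℝ) 1, U s 0 = 1)
    (hUmr : ∀ s ∈ Icc (0:ℝ) 1, U s (-r) = 0) :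
    ∀ i j, (Ut 1 0 - Ut 0 0) i j
      = -∫ s in (0:ℝ)..1, ∫ t in (-r)..(0:ℝ), ((U s t)ᵀ * Rs s t * U s t) i j := by
  have hle : -r ≤ 0 := by linarith
  have hUc : ∀ i j, ContinuousOn (fun p : ℝ × ℝ => U p.1 p.2 i j) (Icc 0 1 ×ˢ Icc (-r) 0) :=
    fun i j => (hU_cd i j).continuousOn
  have hRc : ∀ i j, ContinuousOn (fun p : ℝ × ℝ => R p.1 p.2 i j) (Icc 0 1 ×ˢ Icc (-r) 0) :=
    fun i j => (hR_cd i j).continuousOn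
  have hW : ∀ s ∈ Icc (0:ℝ) 1, ∀ σ ∈ Icc (0:ℝ) 1, ∀ i j, Ut σ 0 i j - Ut s 0 j i
      = -∫ t in (-r)..0, ((U s t)ᵀ * (R σ t - R s t) * U σ t) i j := fun s hs σ hσ i j =>
    wronskian_identity hr (hUt s hs) (hUtt s hs) (hUt σ hσ) (hUtt σ hσ)
      (fun i j => continuousOn_fibre (f := fun s t => R s t i j) hs (hRc i j))
      (fun i j => continuousOn_fibre (f := fun s t => R s t i j) hσ (hRc i j))
      (hR_symm s hs) (hJac s hs) (hJac σ hσ) (hU0 s hs) (hU0 σ hσ) (hUmr s hs) (hUmr σ hσ) i j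
  -- Taking `σ = s` makes the integrand zero.
  have hsym : ∀ s ∈ Icc (0:ℝ) 1, ∀ i j, Ut s 0 j i = Ut s 0 i j := by
    intro s hs i j
    have h := hW s hs s hs i j
    simp only [sub_self, Matrix.mul_zero, Matrix.zero_mul, Matrix.zero_apply,
      intervalIntegral.integral_zero, neg_zero] at h
    linarith
  intro i j
  have hFc : ∀ k l, ContinuousOn (fun p : ℝ × ℝ => U p.1 p.2 k i * Rs p.1 p.2 k l * U p.1 p.2 l j)
      (Icc 0 1 ×ˢ Icc (-r) 0) :=
    fun k l => ((hUc k i).mul (hRs_cont k l)).mul (hUc l j)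
  have hexp : ∀ (A B C : Matrix (Fin n) (Fin n) ℝ),
      (Aᵀ * B * C) i j = ∑ l, ∑ k, A k i * B k l * C l j := fun A B C => by
    simp only [mul_apply, transpose_apply, Finset.sum_mul]
  have hint : ∀ s ∈ Icc (0:ℝ) 1, ∫ t in (-r)..0, ((U s t)ᵀ * Rs s t * U s t) i j
      = ∑ l, ∑ k, ∫ t in (-r)..0, U s t k i * Rs s t k l * U s t l j := by
    intro s hs
    have hI : ∀ k l, IntervalIntegrable (fun t => U s t k i * Rs s t k l * U s t l j)
        volume (-r) 0 := fun k l => (continuousOn_fibre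
      (f := fun s t => U s t k i * Rs s t k l * U s t l j) hs (hFc k l)).intervalIntegrable_of_Icc hle
    simp only [hexp]
    rw [intervalIntegral.integral_finsetSum
      fun l _ => by simpa [Finset.sum_fn] using IntervalIntegrable.sum Finset.univ fun k _ => hI k l]
    exact Finset.sum_congr rfl fun l _ =>
      intervalIntegral.integral_finsetSum fun k _ => hI k l
  have hder : ∀ s ∈ Icc (0:ℝ) 1, HasDerivWithinAt (fun s => Ut s 0 i j)
      (-∫ t in (-r)..0, ((U s t)ᵀ * Rs s t * U s t) i j) (Icc 0 1) s := by
    intro s hs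
    rw [hasDerivWithinAt_iff_tendsto_slope, hint s hs]
    have hlim := (tendsto_finsetSum Finset.univ fun l _ => tendsto_finsetSum Finset.univ fun k _ =>
      tendsto_integral_slope (u := fun s t => U s t k i) (v := fun s t => U s t l j)
        (ρ := fun s t => R s t k l) (ρs := fun s t => Rs s t k l) hle hs (hUc k i) (hUc l j)
        (hRc k l) (hRs_cont k l) fun s hs t ht => hRs s hs t ht k l).neg
    refine hlim.congr' ?_
    filter_upwards [self_mem_nhdsWithin] with σ hσ
    have hI : ∀ k l, IntervalIntegrable
        (fun t => U s t k i * ((σ - s)⁻¹ * (R σ t k l - R s t k l)) * U σ t l j)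
        volume (-r) 0 := by
      intro k l
      refine ContinuousOn.intervalIntegrable_of_Icc hle ?_
      have h1 := continuousOn_fibre (f := fun s t => U s t k i) hs (hUc k i)
      have h2 := continuousOn_fibre (f := fun s t => R s t k l) hs (hRc k l)
      have h3 := continuousOn_fibre (f := fun s t => R s t k l) hσ.1 (hRc k l)
      have h4 := continuousOn_fibre (f := fun s t => U s t l j) hσ.1 (hUc l j)
      fun_prop
    have h := hW s hs σ hσ.1 i j
    rw [hsym s hs i j] at h
    rw [slope_def_module, h, smul_eq_mul, mul_neg, ← intervalIntegral.integral_const_mul]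
    congr 1
    simp only [← intervalIntegral.integral_finsetSum fun k (_ : k ∈ Finset.univ) => hI k _]
    rw [← intervalIntegral.integral_finsetSum
      fun l _ => by simpa [Finset.sum_fn] using IntervalIntegrable.sum Finset.univ fun k _ => hI k l]
    refine intervalIntegral.integral_congr fun t _ => ?_
    simp only [hexp, Finset.mul_sum, Matrix.sub_apply]
    exact Finset.sum_congr rfl fun l _ => Finset.sum_congr rfl fun k _ => by ring
  have hcont : ContinuousOn (fun s => -∫ t in (-r)..0, ((U s t)ᵀ * Rs s t * U s t) i j)
      (Icc (0:ℝ) 1) := by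
    refine (continuousOn_integral_rect hle ?_).neg
    simp only [hexp]
    exact continuousOn_finsetSum _ fun l _ => continuousOn_finsetSum _ fun k _ => hFc k l
  have hftc := integral_eq_sub_of_hasDerivAt_of_le zero_le_one
    (fun s hs => (hder s hs).continuousWithinAt)
    (fun s hs => (hder s (Ioo_subset_Icc_self hs)).hasDerivAt (Icc_mem_nhds hs.1 hs.2))
    (hcont.intervalIntegrable_of_Icc zero_le_one)
  rw [intervalIntegral.integral_neg] at hftc
  rw [hftc, Matrix.sub_apply]
end

section
/- Let n ≥ 1 and 0 ≤ t < r. Let R : [0,r] → Mat_n(ℝ) be continuous with R(u) symmetric for all u, and assume that every twice continuously differentiable w : [0,r] → ℝⁿ with w''(u) + R(u)·w(u) = 0, w(t) = 0 and w(r) = 0 vanishes identically. Let Y : [0,r] → Mat_n(ℝ) be a twice continuously differentiable solution of Y'' + R·Y = 0 with Y(0) = Id, Y(r) = 0, and suppose Y(t) is invertible. Let Z : [0, r−t] → Mat_n(ℝ) be a twice continuously differentiable solution of Z''(y) + R(t+y)·Z(y) = 0 with Z(0) = Id and Z(r−t) = 0. Then Z(y) = Y(t+y)·Y(t)⁻¹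 for all y ∈ [0, r−t]; in particular Z'(0) = Y'(t)·Y(t)⁻¹. -/
open Matrix MeasureTheory Set

/-!
Both `Z(y)` and `Y(t + y)` solve the same linear second order equation on `[0, r - t]`
and vanish at the right end point, so there they are determined by their first derivatives
(`jacobi_unique`, a Grönwall argument). The matrix `Y'(r)` is invertible: a vector `x` in its
kernel gives the solution `Y x` with zero Cauchy data at `r`, whence `x = Y(0) x = 0`.
With `C = Y'(r)⁻¹ Z'(r - t)` the solutions `Z(y)` and `Y(t + y) C` have the same Cauchy data at
`y = r - t`, hence coincide, and evaluating at `y = 0` gives `1 = Y(t) C`, that is,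
`C = Y(t)⁻¹`. Differentiating at `y = 0` gives the second identity. All solutions compared here
are restrictions of solutions already given, so no existence theorem for the equation is needed.
-/

attribute [local instance] Matrix.linftyOpNormedAddCommGroup

/-- A solution of `w'' + R w = 0` with zero Cauchy data at the right end point vanishes. The
uniqueness theorem is applied to the first order system for `(w, w')`; boundedness of `R` on the
compact interval supplies the Lipschitz constant. -/
lemma jacobi_unique {n : ℕ} {a b : ℝ} (R : ℝ → Matrix (Fin n) (Fin n) ℝ)
    (hR : ∀ i j, ContinuousOn (fun u => R u i j) (Icc a b))
    (w w₁ w₂ : ℝ → Fin n → ℝ)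
    (h₁ : ∀ u ∈ Icc a b, HasDerivWithinAt w (w₁ u) (Icc a b) u)
    (h₂ : ∀ u ∈ Icc a b, HasDerivWithinAt w₁ (w₂ u) (Icc a b) u)
    (hode : ∀ u ∈ Icc a b, w₂ u + R u *ᵥ w u = 0)
    (hb : w b = 0) (hb₁ : w₁ b = 0) : ∀ u ∈ Icc a b, w u = 0 := by
  have hRc : ContinuousOn R (Icc a b) :=
    continuousOn_pi.2 fun i => continuousOn_pi.2 fun j => hR i j
  obtain ⟨K, hK⟩ := isCompact_Icc.exists_bound_of_continuousOn hRc
  have hnhds : ∀ u ∈ Ioc a b, Icc a b ∈ nhdsWithin u (Iic u) := fun u hu =>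
    Filter.mem_of_superset (Icc_mem_nhdsLE hu.1) (Icc_subset_Icc_right hu.2)
  have key := ODE_solution_unique_of_mem_Icc_left
    (v := fun u (p : (Fin n → ℝ) × (Fin n → ℝ)) => (p.2, -(R u *ᵥ p.1)))
    (s := fun _ => univ) (K := (max 1 K).toNNReal) (a := a) (b := b)
    (f := fun u => (w u, w₁ u)) (g := fun _ => 0)
    ?_ ?_ ?_ ?_ ?_ ?_ ?_ ?_
  · intro u hu
    exact congrArg Prod.fst (key hu)
  · intro u hu
    refine LipschitzOnWith.of_dist_le_mul fun p _ q _ => ?_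
    have hM : (0 : ℝ) ≤ max 1 K := le_trans zero_le_one (le_max_left _ _)
    rw [Real.coe_toNNReal _ hM, dist_eq_norm, dist_eq_norm]
    have e : ((p.2, -(R u *ᵥ p.1)) : (Fin n → ℝ) × (Fin n → ℝ)) - (q.2, -(R u *ᵥ q.1))
        = ((p - q).2, -(R u *ᵥ (p - q).1)) := by
      ext i <;> simp [mulVec_sub]; ring
    rw [e, Prod.norm_def]
    refine max_le ?_ ?_
    · calc ‖(p - q).2‖ ≤ 1 * ‖p - q‖ := by rw [one_mul]; exact norm_snd_le _
        _ ≤ _ := by gcongr; exact le_max_left _ _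
    · rw [norm_neg]
      calc ‖R u *ᵥ (p - q).1‖ ≤ ‖R u‖ * ‖(p - q).1‖ := linfty_opNorm_mulVec _ _
        _ ≤ _ := by
          gcongr
          · exact (hK u (Ioc_subset_Icc_self hu)).trans (le_max_right _ _)
          · exact norm_fst_le _
  · exact ContinuousOn.prodMk (fun u hu => (h₁ u hu).continuousWithinAt)
      (fun u hu => (h₂ u hu).continuousWithinAt)
  · intro u hu
    have hu' := Ioc_subset_Icc_self hu
    have := ((h₁ u hu').prodMk (h₂ u hu')).mono_of_mem_nhdsWithin (hnhds u hu)
    rwa [eq_neg_of_add_eq_zero_left (hode u hu')] at this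
  · exact fun _ _ => mem_univ _
  · exact continuousOn_const
  · intro u _
    convert hasDerivWithinAt_const u (Iic u) (0 : (Fin n → ℝ) × (Fin n → ℝ)) using 1
    ext i <;> simp
  · exact fun _ _ => mem_univ _
  · simp [hb, hb₁]

lemma hasDerivWithinAt_mulVec_const {n : ℕ} {Y : ℝ → Matrix (Fin n) (Fin n) ℝ}
    {Y' : Matrix (Fin n) (Fin n) ℝ} {s : Set ℝ} {u : ℝ}
    (h : ∀ i j, HasDerivWithinAt (fun x => Y x i j) (Y' i j) s u) (x : Fin n → ℝ) :
    HasDerivWithinAt (fun v => Y v *ᵥ x) (Y' *ᵥ x) s u := by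
  refine hasDerivWithinAt_pi.2 fun i => ?_
  simp only [mulVec, dotProduct]
  exact HasDerivWithinAt.fun_sum fun j _ => (h i j).mul_const (x j)

/-- matrix form of identity (c1) of Lemma 2.4:
if there are no conjugate points between `t` and `r` (i.e. every solution of
`w'' + R·w = 0` vanishing at `t` and `r` vanishes identically), `Y` solves the
matrix Jacobi equation with `Y(0) = Id`, `Y(r) = 0`, `Y(t)` invertible, and `Z`
solves `Z''(y) + R(t+y)·Z(y) = 0` with `Z(0) = Id`, `Z(r−t) = 0`, then
`Z(y) = Y(t+y)·Y(t)⁻¹` for all `y ∈ [0, r−t]`; in particular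
`Z'(0) = Y'(t)·Y(t)⁻¹`. -/
theorem jacobi_tensor_transform (n : ℕ) (hn : 1 ≤ n) (t r : ℝ)
    (ht : 0 ≤ t) (htr : t < r)
    (R Y Y' Y'' Z Z' Z'' : ℝ → Matrix (Fin n) (Fin n) ℝ)
    -- R is continuous and symmetric on [0,r]
    (hRcont : ∀ i j, ContinuousOn (fun u => R u i j) (Icc 0 r))
    (hRsymm : ∀ u ∈ Icc (0:ℝ) r, (R u).IsSymm)
    -- no conjugate points between t and r: every C² vector-valued solution of
    -- w'' + R·w = 0 on [0,r] vanishing at t and r vanishes identically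
    (hnoconj : ∀ w w₁ w₂ : ℝ → Fin n → ℝ,
      (∀ u ∈ Icc (0:ℝ) r, ∀ i, HasDerivWithinAt (fun x => w x i) (w₁ u i) (Icc 0 r) u) →
      (∀ u ∈ Icc (0:ℝ) r, ∀ i, HasDerivWithinAt (fun x => w₁ x i) (w₂ u i) (Icc 0 r) u) →
      (∀ i, ContinuousOn (fun u => w₂ u i) (Icc 0 r)) →
      (∀ u ∈ Icc (0:ℝ) r, w₂ u + (R u).mulVec (w u) = 0) →
      w t = 0 → w r = 0 → ∀ u ∈ Icc (0:ℝ) r, w u = 0)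
    -- Y is a twice continuously differentiable solution on [0,r] with
    -- Y(0) = Id, Y(r) = 0 and Y(t) invertible
    (hY' : ∀ u ∈ Icc (0:ℝ) r, ∀ i j,
      HasDerivWithinAt (fun x => Y x i j) (Y' u i j) (Icc 0 r) u)
    (hY'' : ∀ u ∈ Icc (0:ℝ) r, ∀ i j,
      HasDerivWithinAt (fun x => Y' x i j) (Y'' u i j) (Icc 0 r) u)
    (hY''cont : ∀ i j, ContinuousOn (fun u => Y'' u i j) (Icc 0 r))
    (hYODE : ∀ u ∈ Icc (0:ℝ) r, Y'' u + R u * Y u = 0)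
    (hY0 : Y 0 = 1) (hYr : Y r = 0) (hYt : IsUnit (Y t))
    -- Z is a twice continuously differentiable solution of the shifted
    -- equation on [0, r−t] with Z(0) = Id, Z(r−t) = 0
    (hZ' : ∀ y ∈ Icc (0:ℝ) (r - t), ∀ i j,
      HasDerivWithinAt (fun x => Z x i j) (Z' y i j) (Icc 0 (r - t)) y)
    (hZ'' : ∀ y ∈ Icc (0:ℝ) (r - t), ∀ i j,
      HasDerivWithinAt (fun x => Z' x i j) (Z'' y i j) (Icc 0 (r - t)) y)
    (hZ''cont : ∀ i j, ContinuousOn (fun y => Z'' y i j) (Icc 0 (r - t)))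
    (hZODE : ∀ y ∈ Icc (0:ℝ) (r - t), Z'' y + R (t + y) * Z y = 0)
    (hZ0 : Z 0 = 1) (hZrt : Z (r - t) = 0) :
    (∀ y ∈ Icc (0:ℝ) (r - t), Z y = Y (t + y) * (Y t)⁻¹) ∧
      Z' 0 = Y' t * (Y t)⁻¹ := by
  have hr : (0 : ℝ) ≤ r := ht.trans htr.le
  have hrr : r ∈ Icc (0 : ℝ) r := ⟨hr, le_rfl⟩
  have hrt : (0 : ℝ) ≤ r - t := sub_nonneg.2 htr.le
  have hmaps : MapsTo (fun y => t + y) (Icc 0 (r - t)) (Icc 0 r) := fun y hy =>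
    ⟨by linarith [hy.1], by linarith [hy.2]⟩
  have hinv : IsUnit (Y' r) := by
    rw [← mulVec_injective_iff_isUnit, ← coe_mulVecLin, ← LinearMap.ker_eq_bot,
      LinearMap.ker_eq_bot']
    intro x hx
    have h0 := jacobi_unique R hRcont (fun u => Y u *ᵥ x) (fun u => Y' u *ᵥ x)
      (fun u => Y'' u *ᵥ x)
      (fun u hu => hasDerivWithinAt_mulVec_const (hY' u hu) x)
      (fun u hu => hasDerivWithinAt_mulVec_const (hY'' u hu) x)
      (fun u hu => by rw [mulVec_mulVec, ← add_mulVec, hYODE u hu, zero_mulVec])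
      (by simp [hYr]) hx 0 ⟨le_rfl, hr⟩
    simpa [hY0] using h0
  have hdet := (isUnit_iff_isUnit_det _).1 hinv
  have hshift : ∀ (F F' : ℝ → Matrix (Fin n) (Fin n) ℝ),
      (∀ u ∈ Icc (0:ℝ) r, ∀ i j,
        HasDerivWithinAt (fun x => F x i j) (F' u i j) (Icc 0 r) u) →
      ∀ y ∈ Icc (0:ℝ) (r - t), ∀ i j,
        HasDerivWithinAt (fun x => F (t + x) i j) (F' (t + y) i j) (Icc 0 (r - t)) y := by
    intro F F' hF y hy i j
    have hadd : HasDerivWithinAt (fun x : ℝ => t + x) 1 (Icc 0 (r - t)) y :=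
      (hasDerivWithinAt_id y _).const_add t
    simpa [Function.comp_def] using (hF (t + y) (hmaps hy) i j).comp y hadd hmaps
  obtain ⟨C, hC⟩ : ∃ C, Y' r * C = Z' (r - t) :=
    ⟨(Y' r)⁻¹ * Z' (r - t), mul_nonsing_inv_cancel_left _ _ hdet⟩
  have hZC : ∀ y ∈ Icc (0:ℝ) (r - t), Z y = Y (t + y) * C := by
    intro y hy
    refine ext_of_mulVec_single fun j => ?_
    generalize (Pi.single j 1 : Fin n → ℝ) = x
    rw [← mulVec_mulVec, ← sub_eq_zero]
    refine jacobi_unique (fun y => R (t + y))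
      (fun i j => (hRcont i j).comp (by fun_prop) hmaps)
      (fun y => Z y *ᵥ x - Y (t + y) *ᵥ (C *ᵥ x))
      (fun y => Z' y *ᵥ x - Y' (t + y) *ᵥ (C *ᵥ x))
      (fun y => Z'' y *ᵥ x - Y'' (t + y) *ᵥ (C *ᵥ x))
      (fun y hy => (hasDerivWithinAt_mulVec_const (hZ' y hy) x).sub
        (hasDerivWithinAt_mulVec_const (hshift Y Y' hY' y hy) _))
      (fun y hy => (hasDerivWithinAt_mulVec_const (hZ'' y hy) x).sub
        (hasDerivWithinAt_mulVec_const (hshift Y' Y'' hY'' y hy) _))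
      (fun y hy => ?_) ?_ ?_ y hy
    · rw [eq_neg_of_add_eq_zero_left (hZODE y hy),
        eq_neg_of_add_eq_zero_left (hYODE (t + y) (hmaps hy)), mulVec_sub, neg_mulVec,
        neg_mulVec, mulVec_mulVec _ (R (t + y)) (Z y), mulVec_mulVec _ (R (t + y)) (Y (t + y))]
      abel
    · simp [hZrt, hYr]
    · simp [← hC]
  have h0 : (0 : ℝ) ∈ Icc (0 : ℝ) (r - t) := ⟨le_rfl, hrt⟩
  have hCinv : (Y t)⁻¹ = C := by
    refine inv_eq_right_inv ?_
    have := hZC 0 h0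
    rw [hZ0, add_zero] at this
    exact this.symm
  rw [hCinv]
  refine ⟨hZC, ?_⟩
  refine ext_of_mulVec_single fun j => ?_
  generalize (Pi.single j 1 : Fin n → ℝ) = x
  have hd₁ := hasDerivWithinAt_mulVec_const (hZ' 0 h0) x
  have hd₂ := hasDerivWithinAt_mulVec_const (hshift Y Y' hY' 0 h0) (C *ᵥ x)
  have hd₃ := hd₂.congr (f₁ := fun y => Z y *ᵥ x)
    (fun y hy => by rw [hZC y hy, mulVec_mulVec]) (by rw [hZC 0 h0, mulVec_mulVec])
  have := (uniqueDiffOn_Icc (sub_pos.2 htr) 0 h0).eq_deriv _ hd₁ hd₃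
  rwa [add_zero, mulVec_mulVec] at this
end

section
/- Let n ≥ 1, a > 0, r > 0, and let S : [0,r] → Mat_n(ℝ) be continuous with S(u) invertible and ‖S(u)‖ ≤ a for all u ∈ [0,r]. Then the symmetric matrix M := ∫₀ʳ (S(u)ᵀ·S(u))⁻¹ du is positive definite and ‖M⁻¹‖ ≤ a²/r. -/
/-!
For invertible `A` with `‖A‖ ≤ a`, put `y = (Aᵀ)⁻¹ x`. Then `⟨x, (AᵀA)⁻¹ x⟩ = ‖y‖²` and
`‖x‖ = ‖Aᵀ y‖ ≤ a ‖y‖`, so `‖x‖² ≤ a² ⟨x, (AᵀA)⁻¹ x⟩` (`norm_sq_le_inner_gram_inv`).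
The entries of `(SᵀS)⁻¹` are continuous on `[0, r]`, hence integrable, so integrating this
bound gives the coercivity estimate `(r / a²) ‖x‖² ≤ ⟨x, M x⟩`. Coercivity yields positive
definiteness, and, by Cauchy–Schwarz applied to `w = M⁻¹ x`, the bound on the inverse
(`opNorm_inv_le_of_coercive`).
-/

open Matrix MeasureTheory Set

/-- The operator norm of a real `n × n` matrix with respect to the Euclidean
norm on `ℝⁿ`. -/
noncomputable def opNorm {n : ℕ} (A : Matrix (Fin n) (Fin n) ℝ) : ℝ :=
  ‖Matrix.toEuclideanCLM (𝕜 := ℝ) A‖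

theorem norm_sq_le_inner_gram_inv {n : ℕ} {a : ℝ} {A : Matrix (Fin n) (Fin n) ℝ}
    (hA : IsUnit A) (hbound : opNorm A ≤ a) (x : EuclideanSpace ℝ (Fin n)) :
    ‖x‖ ^ 2 ≤ a ^ 2 * (x.ofLp ⬝ᵥ ((Aᵀ * A)⁻¹ *ᵥ x.ofLp)) := by
  have hdet : IsUnit A.det := (Matrix.isUnit_iff_isUnit_det A).1 hA
  have hdetT : IsUnit Aᵀ.det := by rwa [Matrix.det_transpose]
  set y : EuclideanSpace ℝ (Fin n) := WithLp.toLp 2 (Aᵀ⁻¹ *ᵥ x.ofLp) with hy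
  have hx : x = Matrix.toEuclideanCLM (𝕜 := ℝ) Aᵀ y := by
    rw [hy, Matrix.toEuclideanCLM_toLp, Matrix.mulVec_mulVec, Matrix.mul_nonsing_inv _ hdetT,
      Matrix.one_mulVec]
  have hT : ‖Matrix.toEuclideanCLM (𝕜 := ℝ) Aᵀ‖ ≤ a := by
    have h : Aᵀ = star A := by
      rw [Matrix.star_eq_conjTranspose, Matrix.conjTranspose_eq_transpose_of_trivial]
    rw [h, map_star, ContinuousLinearMap.star_eq_adjoint, LinearIsometryEquiv.norm_map]
    exact hbound
  have hxy : ‖x‖ ≤ a * ‖y‖ := by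
    calc ‖x‖ = ‖Matrix.toEuclideanCLM (𝕜 := ℝ) Aᵀ y‖ := congrArg _ hx
      _ ≤ a * ‖y‖ := ContinuousLinearMap.le_of_opNorm_le _ hT y
  have hq : x.ofLp ⬝ᵥ ((Aᵀ * A)⁻¹ *ᵥ x.ofLp) = ‖y‖ ^ 2 := by
    rw [Matrix.mul_inv_rev, ← Matrix.mulVec_mulVec, Matrix.dotProduct_mulVec,
      ← Matrix.mulVec_transpose, Matrix.transpose_nonsing_inv, EuclideanSpace.real_norm_sq_eq]
    simp [hy, dotProduct, pow_two]
  rw [hq, ← mul_pow]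
  exact pow_le_pow_left₀ (norm_nonneg x) hxy 2

theorem continuousOn_gram_inv {n : ℕ} {s : Set ℝ} {S : ℝ → Matrix (Fin n) (Fin n) ℝ}
    (hcont : ∀ i j, ContinuousOn (fun u => S u i j) s) (hinv : ∀ u ∈ s, IsUnit (S u)) :
    ContinuousOn (fun u => ((S u)ᵀ * S u)⁻¹) s := by
  have hS : ContinuousOn S s := continuousOn_pi.2 fun i => continuousOn_pi.2 fun j => hcont i j
  have hG : ContinuousOn (fun u => (S u)ᵀ * S u) s :=
    (continuous_id.matrix_transpose.matrix_mul continuous_id).comp_continuousOn hS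
  have hdet : ContinuousOn (fun u => ((S u)ᵀ * S u).det) s :=
    continuous_id.matrix_det.comp_continuousOn hG
  have hadj : ContinuousOn (fun u => ((S u)ᵀ * S u).adjugate) s :=
    continuous_id.matrix_adjugate.comp_continuousOn hG
  have hne : ∀ u ∈ s, ((S u)ᵀ * S u).det ≠ 0 := by
    intro u hu
    have h := ((Matrix.isUnit_iff_isUnit_det (S u)).1 (hinv u hu)).ne_zero
    simp [Matrix.det_mul, h]
  refine ((hdet.inv₀ hne).smul hadj).congr fun u _ => ?_
  simp [Matrix.inv_def]

theorem opNorm_inv_le_of_coercive {n : ℕ} {c : ℝ} (hc : 0 < c)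
    {M : Matrix (Fin n) (Fin n) ℝ} (hM : IsUnit M)
    (hcoer : ∀ x : EuclideanSpace ℝ (Fin n), c * ‖x‖ ^ 2 ≤ x.ofLp ⬝ᵥ (M *ᵥ x.ofLp)) :
    opNorm M⁻¹ ≤ c⁻¹ := by
  refine ContinuousLinearMap.opNorm_le_bound _ (by positivity) fun x => ?_
  set w := Matrix.toEuclideanCLM (𝕜 := ℝ) M⁻¹ x with hw
  have hMw : Matrix.toEuclideanCLM (𝕜 := ℝ) M w = x := by
    rw [hw, ← mul_apply_eq_comp, ← map_mul,
      Matrix.mul_nonsing_inv _ ((Matrix.isUnit_iff_isUnit_det M).1 hM), map_one,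
      one_apply_eq_self]
  have h1 := hcoer w
  rw [← Matrix.inner_toEuclideanCLM, hMw] at h1
  have h2 : c * ‖w‖ ^ 2 ≤ ‖w‖ * ‖x‖ := h1.trans (real_inner_le_norm w x)
  rw [inv_mul_eq_div, le_div_iff₀ hc]
  rcases (norm_nonneg w).eq_or_lt with h0 | h0
  · rw [← h0]; simp
  · exact le_of_mul_le_mul_left (by linarith) h0

/-- computational core of Lemma 4.3: if `S : [0,r] → Mat_n(ℝ)` is
continuous with `S(u)` invertible and `‖S(u)‖ ≤ a`, then the symmetric matrix
`M = ∫₀ʳ (S(u)ᵀ·S(u))⁻¹ du` is positive definite and `‖M⁻¹‖ ≤ a²/r`. -/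
theorem integral_inverse_posdef_bound (n : ℕ) (hn : 1 ≤ n) (a r : ℝ)
    (ha : 0 < a) (hr : 0 < r)
    (S : ℝ → Matrix (Fin n) (Fin n) ℝ)
    (hScont : ∀ i j, ContinuousOn (fun u => S u i j) (Icc 0 r))
    (hSinv : ∀ u ∈ Icc (0:ℝ) r, IsUnit (S u))
    (hSbound : ∀ u ∈ Icc (0:ℝ) r, opNorm (S u) ≤ a)
    (M : Matrix (Fin n) (Fin n) ℝ)
    (hM : M = Matrix.of fun i j => ∫ u in (0:ℝ)..r, ((S u)ᵀ * S u)⁻¹ i j) :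
    M.PosDef ∧ opNorm M⁻¹ ≤ a ^ 2 / r := by
  have hent : ∀ i j, ContinuousOn (fun u => ((S u)ᵀ * S u)⁻¹ i j) (Icc 0 r) := fun i j =>
    continuousOn_pi.1 (continuousOn_pi.1 (continuousOn_gram_inv hScont hSinv) i) j
  have hint : ∀ i j, IntervalIntegrable (fun u => ((S u)ᵀ * S u)⁻¹ i j) volume 0 r := fun i j =>
    (hent i j).intervalIntegrable_of_Icc hr.le
  have hquad : ∀ x : Fin n → ℝ,
      x ⬝ᵥ (M *ᵥ x) = ∫ u in (0:ℝ)..r, x ⬝ᵥ (((S u)ᵀ * S u)⁻¹ *ᵥ x) := by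
    intro x
    simp only [dotProduct, Matrix.mulVec, hM, Matrix.of_apply]
    rw [intervalIntegral.integral_finsetSum]
    · refine Finset.sum_congr rfl fun i _ => ?_
      rw [intervalIntegral.integral_const_mul, intervalIntegral.integral_finsetSum]
      · simp only [intervalIntegral.integral_mul_const]
      · exact fun j _ => (hint i j).mul_const _
    · intro i _
      refine IntervalIntegrable.const_mul ?_ _
      have h := IntervalIntegrable.sum Finset.univ fun j _ => (hint i j).mul_const (x j)
      simpa [Finset.sum_fn] using h
  have hcoer : ∀ x : EuclideanSpace ℝ (Fin n),
      (r / a ^ 2) * ‖x‖ ^ 2 ≤ x.ofLp ⬝ᵥ (M *ᵥ x.ofLp) := by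
    intro x
    have hcont : ContinuousOn
        (fun u => x.ofLp ⬝ᵥ (((S u)ᵀ * S u)⁻¹ *ᵥ x.ofLp)) (Icc 0 r) := by
      simp only [dotProduct, Matrix.mulVec]
      exact continuousOn_finsetSum _ fun i _ => continuousOn_const.mul
        (continuousOn_finsetSum _ fun j _ => (hent i j).mul continuousOn_const)
    rw [hquad]
    calc (r / a ^ 2) * ‖x‖ ^ 2 = ∫ _ in (0:ℝ)..r, ‖x‖ ^ 2 / a ^ 2 := by
          rw [intervalIntegral.integral_const, smul_eq_mul]; ring
      _ ≤ _ := intervalIntegral.integral_mono_on hr.le intervalIntegrable_const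
          (hcont.intervalIntegrable_of_Icc hr.le) fun u hu => by
            rw [div_le_iff₀' (by positivity)]
            exact norm_sq_le_inner_gram_inv (hSinv u hu) (hSbound u hu) x
  have hpos : 0 < r / a ^ 2 := by positivity
  have hPD : M.PosDef := by
    refine .of_dotProduct_mulVec_pos ?_ fun x hx => ?_
    · have hsymm : ∀ u i j, ((S u)ᵀ * S u)⁻¹ j i = ((S u)ᵀ * S u)⁻¹ i j := by
        intro u i j
        rw [← Matrix.transpose_apply ((S u)ᵀ * S u)⁻¹ i j, Matrix.transpose_nonsing_inv,
          Matrix.transpose_mul, Matrix.transpose_transpose]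
      ext i j
      simp [hM, hsymm]
    · have hx' : 0 < ‖(WithLp.toLp 2 x : EuclideanSpace ℝ (Fin n))‖ := by
        rw [norm_pos_iff]
        simpa using hx
      have h := hcoer (WithLp.toLp 2 x)
      simp only [star_trivial]
      exact lt_of_lt_of_le (by positivity) h
  refine ⟨hPD, ?_⟩
  have h := opNorm_inv_le_of_coercive hpos hPD.isUnit hcoer
  rwa [inv_div] at h
end

section
/- For every n ≥ 1, ρ > 0 and C₁ > 0 there exists a₂ > 0, depending only on ρ and C₁, with the following property. Let r > 1 and let S : (−∞, r) → Mat_n(ℝ) be continuous with S(u) invertible for every u, such that: (i) ‖S(u)‖ ≤ C₁ for all u ∈ [0,1]; (ii) for every t ∈ (−∞, r) the improper integral M(t) := ∫_{−∞}^{t} (S(u)ᵀ·S(u))⁻¹ du converges and M(t) is invertible; (iii) for every t ∈ [0, r) the symmetric matrix (S(t)⁻¹)ᵀ · M(t)⁻¹ · S(t)⁻¹ − ρ·Id is positive semidefinite. Then ‖S(t)x‖ ≤ a₂ · e^{−ρt/2} · ‖x‖ for all t ∈ [0, r) and all x ∈ ℝⁿ. -/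
/-!
Write `P(t) = (S(t)ᵀ S(t))⁻¹`, so that `M' = P`. Hypothesis (iii) is equivalent to
`ρ M(t) ≤ P(t)` in the Loewner order, hence for a fixed vector `z` the function
`f(t) = ⟨z, M(t) z⟩` satisfies the differential inequality `f' ≥ ρ f` on `[0, r)`, and
`f(t) ≥ e^{ρ(t-1)} f(1)` for `t ≥ 1`. The bound `‖S‖ ≤ C₁` on `[0,1]` gives `P ≥ C₁⁻²` there,
so `f(1) ≥ C₁⁻² ‖z‖²`. Thus `M(t) ≥ e^{ρ(t-1)} C₁⁻²`, and (iii), read as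
`ρ ‖S(t)x‖² ≤ ⟨x, M(t)⁻¹ x⟩`, yields `‖S(t)x‖² ≤ ρ⁻¹ C₁² e^{ρ} e^{-ρt} ‖x‖²` for `t ≥ 1`.
For `t ≤ 1` the claim is immediate from the bound on `S`.

The order relations are handled vector by vector through Cauchy–Schwarz; the symmetry of `M(t)`
is never needed.
-/

open Matrix MeasureTheory Set

/-- The Euclidean norm on `ℝⁿ`. -/
noncomputable def euclNorm {n : ℕ} (x : Fin n → ℝ) : ℝ :=
  Real.sqrt (∑ i, x i ^ 2)

theorem dotProduct_sq_le {n : ℕ} (x y : Fin n → ℝ) :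
    (x ⬝ᵥ y) ^ 2 ≤ (x ⬝ᵥ x) * (y ⬝ᵥ y) := by
  have h := Finset.sum_mul_sq_le_sq_mul_sq Finset.univ x y
  simpa [dotProduct, sq] using h

theorem dotProduct_self_nonneg' {n : ℕ} (x : Fin n → ℝ) : 0 ≤ x ⬝ᵥ x :=
  Finset.sum_nonneg fun i _ => mul_self_nonneg (x i)

theorem euclNorm_sq {n : ℕ} (x : Fin n → ℝ) : euclNorm x ^ 2 = x ⬝ᵥ x := by
  unfold euclNorm
  rw [Real.sq_sqrt (Finset.sum_nonneg fun i _ => sq_nonneg (x i))]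
  simp [dotProduct, sq]

theorem euclNorm_nonneg {n : ℕ} (x : Fin n → ℝ) : 0 ≤ euclNorm x := Real.sqrt_nonneg _

theorem euclNorm_mulVec_le {n : ℕ} (A : Matrix (Fin n) (Fin n) ℝ) (x : Fin n → ℝ) :
    euclNorm (A *ᵥ x) ≤ opNorm A * euclNorm x := by
  have h := (Matrix.toEuclideanCLM (𝕜 := ℝ) A).le_opNorm (WithLp.toLp 2 x)
  rw [Matrix.toEuclideanCLM_toLp] at h
  simpa [EuclideanSpace.norm_eq, opNorm, euclNorm] using h

/-- Dualizes the bound on `A`: if `‖A‖ ≤ C` then `⟨z, (AᵀA)⁻¹ z⟩ ≥ C⁻² ‖z‖²`, stated for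
`w = (A⁻¹)ᵀ z`, whose squared norm is the left-hand side. -/
theorem dotProduct_le_of_opNorm_le {n : ℕ} {A : Matrix (Fin n) (Fin n) ℝ} {C : ℝ}
    (hC : opNorm A ≤ C) {z w : Fin n → ℝ} (hw : Aᵀ *ᵥ w = z) :
    z ⬝ᵥ z ≤ C ^ 2 * (w ⬝ᵥ w) := by
  have h1 : z ⬝ᵥ z = w ⬝ᵥ (A *ᵥ z) := by
    conv_lhs => lhs; rw [← hw]
    rw [mulVec_transpose, ← dotProduct_mulVec]
  have h2 := dotProduct_sq_le w (A *ᵥ z)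
  have h3 : (A *ᵥ z) ⬝ᵥ (A *ᵥ z) ≤ C ^ 2 * (z ⬝ᵥ z) := by
    rw [← euclNorm_sq, ← euclNorm_sq, ← mul_pow]
    have := euclNorm_mulVec_le A z
    have h4 := euclNorm_nonneg z
    exact pow_le_pow_left₀ (euclNorm_nonneg _) (this.trans (by gcongr)) 2
  have hz := dotProduct_self_nonneg' z
  have hw0 := dotProduct_self_nonneg' w
  rw [← h1] at h2
  rcases hz.eq_or_lt with h | h
  · rw [← h]; positivity
  · have : (z ⬝ᵥ z) * (z ⬝ᵥ z) ≤ (C ^ 2 * (w ⬝ᵥ w)) * (z ⬝ᵥ z) := by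
      nlinarith [mul_le_mul_of_nonneg_left h3 hw0]
    exact le_of_mul_le_mul_right this h

theorem quadForm_inv_gram {n : ℕ} (A : Matrix (Fin n) (Fin n) ℝ) (z : Fin n → ℝ) :
    z ⬝ᵥ ((Aᵀ * A)⁻¹ *ᵥ z) = ((A⁻¹)ᵀ *ᵥ z) ⬝ᵥ ((A⁻¹)ᵀ *ᵥ z) := by
  rw [Matrix.mul_inv_rev, ← transpose_nonsing_inv, ← mulVec_mulVec, dotProduct_mulVec,
    mulVec_transpose]

/-- Hypothesis (iii) tested on the vector `A x`. -/
theorem rho_mul_le_of_posSemidef {n : ℕ} {A B : Matrix (Fin n) (Fin n) ℝ} {ρ : ℝ}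
    (hA : IsUnit A)
    (h : ((A⁻¹)ᵀ * B⁻¹ * A⁻¹ - ρ • (1 : Matrix (Fin n) (Fin n) ℝ)).PosSemidef)
    (x : Fin n → ℝ) :
    ρ * ((A *ᵥ x) ⬝ᵥ (A *ᵥ x)) ≤ x ⬝ᵥ (B⁻¹ *ᵥ x) := by
  have h1 := h.dotProduct_mulVec_nonneg (A *ᵥ x)
  have hx : A⁻¹ *ᵥ (A *ᵥ x) = x := by
    rw [mulVec_mulVec, nonsing_inv_mul _ ((isUnit_iff_isUnit_det A).1 hA), one_mulVec]
  rw [star_trivial, sub_mulVec, dotProduct_sub, ← mulVec_mulVec, hx, ← mulVec_mulVec,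
    dotProduct_mulVec, vecMul_transpose, hx, smul_mulVec, one_mulVec, dotProduct_smul,
    smul_eq_mul] at h1
  linarith

/-- Hypothesis (iii) in the form `ρ B ≤ (AᵀA)⁻¹`. -/
theorem rho_mul_quadForm_le {n : ℕ} {A B : Matrix (Fin n) (Fin n) ℝ} {ρ : ℝ} (hρ : 0 < ρ)
    (hA : IsUnit A) (hB : IsUnit B)
    (h : ((A⁻¹)ᵀ * B⁻¹ * A⁻¹ - ρ • (1 : Matrix (Fin n) (Fin n) ℝ)).PosSemidef)
    (z : Fin n → ℝ) :
    ρ * (z ⬝ᵥ (B *ᵥ z)) ≤ z ⬝ᵥ ((Aᵀ * A)⁻¹ *ᵥ z) := by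
  have h1 := rho_mul_le_of_posSemidef hA h (B *ᵥ z)
  have hx : B⁻¹ *ᵥ (B *ᵥ z) = z := by
    rw [mulVec_mulVec, nonsing_inv_mul _ ((isUnit_iff_isUnit_det B).1 hB), one_mulVec]
  rw [hx, dotProduct_comm (B *ᵥ z) z] at h1
  have h2 := dotProduct_sq_le ((A⁻¹)ᵀ *ᵥ z) (A *ᵥ (B *ᵥ z))
  have h3 : ((A⁻¹)ᵀ *ᵥ z) ⬝ᵥ (A *ᵥ (B *ᵥ z)) = z ⬝ᵥ (B *ᵥ z) := by
    rw [mulVec_transpose, ← dotProduct_mulVec, mulVec_mulVec,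
      nonsing_inv_mul _ ((isUnit_iff_isUnit_det A).1 hA), one_mulVec]
  rw [quadForm_inv_gram]
  rw [h3] at h2
  have hp := dotProduct_self_nonneg' ((A⁻¹)ᵀ *ᵥ z)
  set p := ((A⁻¹)ᵀ *ᵥ z) ⬝ᵥ ((A⁻¹)ᵀ *ᵥ z)
  set q := z ⬝ᵥ (B *ᵥ z)
  set s := (A *ᵥ (B *ᵥ z)) ⬝ᵥ (A *ᵥ (B *ᵥ z))
  rcases le_or_gt q 0 with hq | hq
  · nlinarith
  · have : ρ * q * q ≤ p * q := by
      nlinarith [mul_le_mul_of_nonneg_left h1 hp, mul_le_mul_of_nonneg_left h2 hρ.le]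
    exact le_of_mul_le_mul_right this hq

/-- A lower bound `c` for the quadratic form of `B` gives the upper bound `c⁻¹` for that of
`B⁻¹`; no symmetry is required. -/
theorem quadForm_inv_le {n : ℕ} {B : Matrix (Fin n) (Fin n) ℝ} (hB : IsUnit B) {c : ℝ}
    (hc : 0 < c) (h : ∀ z, c * (z ⬝ᵥ z) ≤ z ⬝ᵥ (B *ᵥ z)) (x : Fin n → ℝ) :
    c * (x ⬝ᵥ (B⁻¹ *ᵥ x)) ≤ x ⬝ᵥ x := by
  have h1 := h (B⁻¹ *ᵥ x)
  rw [mulVec_mulVec, mul_nonsing_inv _ ((isUnit_iff_isUnit_det B).1 hB), one_mulVec,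
    dotProduct_comm _ x] at h1
  have h2 := dotProduct_sq_le x (B⁻¹ *ᵥ x)
  have hx := dotProduct_self_nonneg' x
  set q := x ⬝ᵥ (B⁻¹ *ᵥ x)
  set s := (B⁻¹ *ᵥ x) ⬝ᵥ (B⁻¹ *ᵥ x)
  rcases le_or_gt q 0 with hq | hq
  · nlinarith
  · have : c * q * q ≤ (x ⬝ᵥ x) * q := by
      nlinarith [mul_le_mul_of_nonneg_left h1 hx, mul_le_mul_of_nonneg_left h2 hc.le]
    exact le_of_mul_le_mul_right this hq

theorem continuousOn_quadForm {n : ℕ} {r : ℝ} {S : ℝ → Matrix (Fin n) (Fin n) ℝ}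
    (hS : ∀ i j, ContinuousOn (fun u => S u i j) (Iio r))
    (hU : ∀ u ∈ Iio r, IsUnit (S u)) (z : Fin n → ℝ) :
    ContinuousOn (fun u => z ⬝ᵥ (((S u)ᵀ * S u)⁻¹ *ᵥ z)) (Iio r) := by
  have hc : ContinuousOn S (Iio r) :=
    continuousOn_pi.2 fun i => continuousOn_pi.2 fun j => hS i j
  have hG : ContinuousOn (fun u => (S u)ᵀ * S u) (Iio r) := by
    have : Continuous fun A : Matrix (Fin n) (Fin n) ℝ => Aᵀ * A := by fun_prop
    exact this.comp_continuousOn hc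
  have hdet : ∀ u ∈ Iio r, ((S u)ᵀ * S u).det ≠ 0 := by
    intro u hu
    have := ((isUnit_iff_isUnit_det _).1 (hU u hu)).ne_zero
    rw [det_mul, det_transpose]
    exact mul_ne_zero this this
  have hI : ContinuousOn (fun u => ((S u)ᵀ * S u)⁻¹) (Iio r) := by
    simp only [Matrix.inv_def, Ring.inverse_eq_inv']
    refine ContinuousOn.smul (ContinuousOn.inv₀ ?_ hdet) ?_
    · exact (continuous_id.matrix_det).comp_continuousOn hG
    · exact (continuous_id.matrix_adjugate).comp_continuousOn hG
  have : Continuous fun A : Matrix (Fin n) (Fin n) ℝ => z ⬝ᵥ (A *ᵥ z) := by fun_prop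
  exact this.comp_continuousOn hI

theorem quadForm_integral {n : ℕ} {P : ℝ → Matrix (Fin n) (Fin n) ℝ} {s : Set ℝ}
    (hP : ∀ i j, IntegrableOn (fun u => P u i j) s) (z : Fin n → ℝ) :
    IntegrableOn (fun u => z ⬝ᵥ (P u *ᵥ z)) s ∧
      z ⬝ᵥ (Matrix.of (fun i j => ∫ u in s, P u i j) *ᵥ z) = ∫ u in s, z ⬝ᵥ (P u *ᵥ z) := by
  have hj : ∀ i j, Integrable (fun u => P u i j * z j) (volume.restrict s) :=
    fun i j => (hP i j).mul_const _
  have hi : ∀ i, Integrable (fun u => z i * ∑ j, P u i j * z j) (volume.restrict s) :=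
    fun i => (integrable_finsetSum _ fun j _ => hj i j).const_mul _
  constructor
  · exact integrable_finsetSum _ fun i _ => hi i
  · simp only [dotProduct, mulVec, of_apply]
    rw [integral_finsetSum _ fun i _ => hi i]
    refine Finset.sum_congr rfl fun i _ => ?_
    rw [integral_const_mul, integral_finsetSum _ fun j _ => hj i j]
    simp only [integral_mul_const]

/-- Grönwall-type growth: if `f(t) = ∫_{-∞}^t p` satisfies `f' = p ≥ ρ f` on `[0, r)`, then
`f(t) ≥ e^{ρ(t-1)} f(1)` for `t ∈ [1, r)`. -/
theorem exp_growth_integral {p : ℝ → ℝ} {r ρ : ℝ} (hr : 1 < r)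
    (hc : ContinuousOn p (Iio r)) (hint : ∀ t ∈ Iio r, IntegrableOn p (Iic t))
    (hρp : ∀ t ∈ Ico 0 r, ρ * ∫ u in Iic t, p u ≤ p t) {t : ℝ} (ht1 : 1 ≤ t) (htr : t < r) :
    Real.exp (ρ * (t - 1)) * ∫ u in Iic 1, p u ≤ ∫ u in Iic t, p u := by
  have hder : ∀ s ∈ Iio r, HasDerivAt (fun t => ∫ u in Iic t, p u) (p s) s := by
    intro s hs
    have hii : IntervalIntegrable p volume 0 s :=
      (hc.mono fun u hu => (mem_uIcc.1 hu).elim (fun h => h.2.trans_lt hs)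
        (fun h => h.2.trans_lt (zero_lt_one.trans hr))).intervalIntegrable
    have h1 : HasDerivAt (fun t => ∫ u in (0 : ℝ)..t, p u) (p s) s :=
      intervalIntegral.integral_hasDerivAt_right hii
        (hc.stronglyMeasurableAtFilter isOpen_Iio s hs)
        (hc.continuousAt (Iio_mem_nhds hs))
    refine (h1.const_add (∫ u in Iic 0, p u)).congr_of_eventuallyEq ?_
    filter_upwards [Iio_mem_nhds hs] with t ht
    rw [← intervalIntegral.integral_Iic_sub_Iic (hint 0 (zero_lt_one.trans hr)) (hint t ht)]
    exact (add_sub_cancel _ _).symm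
  have hgder : ∀ s ∈ Iio r, HasDerivAt
      (fun t => Real.exp (-(ρ * t)) * ∫ u in Iic t, p u)
      (Real.exp (-(ρ * s)) * (p s - ρ * ∫ u in Iic s, p u)) s := by
    intro s hs
    have h1 : HasDerivAt (fun t => Real.exp (-(ρ * t))) (Real.exp (-(ρ * s)) * -(ρ * 1)) s :=
      (((hasDerivAt_id s).const_mul ρ).neg).exp
    exact (h1.mul (hder s hs)).congr_deriv (by ring)
  have hmono : MonotoneOn (fun t => Real.exp (-(ρ * t)) * ∫ u in Iic t, p u) (Icc 1 t) := by
    refine monotoneOn_of_hasDerivWithinAt_nonneg (convex_Icc 1 t)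
      (fun s hs => (hgder s (hs.2.trans_lt htr)).continuousAt.continuousWithinAt)
      (fun s hs => (hgder s ((interior_subset hs).2.trans_lt htr)).hasDerivWithinAt)
      fun s hs => ?_
    have hs' := interior_subset hs
    have := hρp s ⟨zero_le_one.trans hs'.1, hs'.2.trans_lt htr⟩
    exact mul_nonneg (Real.exp_pos _).le (by linarith)
  have h := hmono (left_mem_Icc.2 ht1) (right_mem_Icc.2 ht1) ht1
  have h2 := mul_le_mul_of_nonneg_left h (Real.exp_pos (ρ * t)).le
  simp only [← mul_assoc, ← Real.exp_add] at h2
  rw [show ρ * t + -(ρ * 1) = ρ * (t - 1) by ring, show ρ * t + -(ρ * t) = 0 by ring,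
    Real.exp_zero, one_mul] at h2
  exact h2

/-- analytic core of Proposition 2.5(b): for every `ρ > 0` and
`C₁ > 0` there is `a₂ > 0` (depending only on `ρ` and `C₁`) such that whenever
`r > 1` and `S : (−∞,r) → Mat_n(ℝ)` is continuous with invertible values,
`‖S(u)‖ ≤ C₁` on `[0,1]`, the improper integrals
`M(t) = ∫_{−∞}^t (S(u)ᵀ·S(u))⁻¹ du` converge and are invertible, and
`(S(t)⁻¹)ᵀ·M(t)⁻¹·S(t)⁻¹ ≥ ρ·Id` on `[0,r)`, then
`‖S(t)x‖ ≤ a₂·e^{−ρt/2}·‖x‖` for all `t ∈ [0,r)` and `x ∈ ℝⁿ`. -/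
theorem exponential_decay_of_jacobi_tensor (ρ C₁ : ℝ) (hρ : 0 < ρ) (hC₁ : 0 < C₁) :
    ∃ a₂ : ℝ, 0 < a₂ ∧
      ∀ (n : ℕ), 1 ≤ n → ∀ (r : ℝ), 1 < r →
        ∀ S M : ℝ → Matrix (Fin n) (Fin n) ℝ,
          -- S is continuous on (−∞, r) with invertible values
          (∀ i j, ContinuousOn (fun u => S u i j) (Iio r)) →
          (∀ u ∈ Iio r, IsUnit (S u)) →
          -- (i) ‖S(u)‖ ≤ C₁ on [0,1]
          (∀ u ∈ Icc (0:ℝ) 1, opNorm (S u) ≤ C₁) →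
          -- (ii) the improper integral M(t) converges and is invertible
          (∀ t ∈ Iio r,
            (∀ i j, IntegrableOn (fun u => ((S u)ᵀ * S u)⁻¹ i j) (Iic t)) ∧
            M t = Matrix.of (fun i j => ∫ u in Iic t, ((S u)ᵀ * S u)⁻¹ i j) ∧
            IsUnit (M t)) →
          -- (iii) (S(t)⁻¹)ᵀ·M(t)⁻¹·S(t)⁻¹ − ρ·Id is positive semidefinite on [0,r)
          (∀ t ∈ Ico (0:ℝ) r,
            (((S t)⁻¹)ᵀ * (M t)⁻¹ * (S t)⁻¹
              - ρ • (1 : Matrix (Fin n) (Fin n) ℝ)).PosSemidef) →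
          ∀ t ∈ Ico (0:ℝ) r, ∀ x : Fin n → ℝ,
            euclNorm ((S t).mulVec x) ≤ a₂ * Real.exp (-(ρ * t) / 2) * euclNorm x := by
  refine ⟨C₁ * Real.exp (ρ / 2) * (1 + 1 / Real.sqrt ρ), by positivity, ?_⟩
  intro n _ r hr S M hS hU hC hM hP t ht x
  have hsρ : 0 < Real.sqrt ρ := Real.sqrt_pos.2 hρ
  have hx := euclNorm_nonneg x
  rcases le_or_gt t 1 with ht1 | ht1
  · have h1 : euclNorm (S t *ᵥ x) ≤ C₁ * euclNorm x :=
      (euclNorm_mulVec_le _ _).trans (by gcongr; exact hC t ⟨ht.1, ht1⟩)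
    refine h1.trans (mul_le_mul_of_nonneg_right ?_ hx)
    have h2 : 1 ≤ Real.exp (ρ / 2) * Real.exp (-(ρ * t) / 2) := by
      rw [← Real.exp_add]
      exact Real.one_le_exp (by nlinarith)
    have h3 : 1 ≤ 1 + 1 / Real.sqrt ρ := by
      have : 0 < 1 / Real.sqrt ρ := by positivity
      linarith
    calc C₁ = C₁ * (1 * 1) := by ring
      _ ≤ C₁ * ((Real.exp (ρ / 2) * Real.exp (-(ρ * t) / 2)) * (1 + 1 / Real.sqrt ρ)) := by
        gcongr
      _ = _ := by ring
  · have hMq : ∀ s ∈ Iio r, ∀ z : Fin n → ℝ,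
        IntegrableOn (fun u => z ⬝ᵥ (((S u)ᵀ * S u)⁻¹ *ᵥ z)) (Iic s) ∧
        z ⬝ᵥ (M s *ᵥ z) = ∫ u in Iic s, z ⬝ᵥ (((S u)ᵀ * S u)⁻¹ *ᵥ z) := by
      intro s hs z
      rw [(hM s hs).2.1]
      exact quadForm_integral (hM s hs).1 z
    have hone : ∀ z : Fin n → ℝ,
        (z ⬝ᵥ z) / C₁ ^ 2 ≤ ∫ u in Iic 1, z ⬝ᵥ (((S u)ᵀ * S u)⁻¹ *ᵥ z) := by
      intro z
      have hi := (hMq 1 hr z).1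
      calc (z ⬝ᵥ z) / C₁ ^ 2 = ∫ _ in Icc (0 : ℝ) 1, (z ⬝ᵥ z) / C₁ ^ 2 := by simp
        _ ≤ ∫ u in Icc (0 : ℝ) 1, z ⬝ᵥ (((S u)ᵀ * S u)⁻¹ *ᵥ z) := by
          refine setIntegral_mono_on (by simp) (hi.mono_set Icc_subset_Iic_self)
            measurableSet_Icc fun u hu => ?_
          rw [quadForm_inv_gram, div_le_iff₀' (by positivity)]
          refine dotProduct_le_of_opNorm_le (hC u hu) ?_
          rw [mulVec_mulVec, ← transpose_mul, nonsing_inv_mul _ ((isUnit_iff_isUnit_det _).1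
            (hU u (hu.2.trans_lt hr))), transpose_one, one_mulVec]
        _ ≤ _ := by
          refine setIntegral_mono_set hi (Filter.Eventually.of_forall fun u => ?_)
            (Filter.Eventually.of_forall Icc_subset_Iic_self)
          change 0 ≤ z ⬝ᵥ (((S u)ᵀ * S u)⁻¹ *ᵥ z)
          rw [quadForm_inv_gram]
          exact dotProduct_self_nonneg' _
    have hlow : ∀ z : Fin n → ℝ,
        Real.exp (ρ * (t - 1)) / C₁ ^ 2 * (z ⬝ᵥ z) ≤ z ⬝ᵥ (M t *ᵥ z) := by
      intro z
      rw [(hMq t ht.2 z).2]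
      refine le_trans ?_ (exp_growth_integral hr (continuousOn_quadForm hS hU z)
        (fun s hs => (hMq s hs z).1) (ρ := ρ) (fun s hs => ?_) ht1.le ht.2)
      · have := mul_le_mul_of_nonneg_left (hone z) (Real.exp_pos (ρ * (t - 1))).le
        refine le_trans (le_of_eq ?_) this
        ring
      · rw [← (hMq s hs.2 z).2]
        exact rho_mul_quadForm_le hρ (hU s hs.2) (hM s hs.2).2.2 (hP s hs) z
    have h1 := quadForm_inv_le (hM t ht.2).2.2 (by positivity) hlow x
    have h2 := rho_mul_le_of_posSemidef (hU t ht.2) (hP t ht) x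
    have hc : 0 < Real.exp (ρ * (t - 1)) / C₁ ^ 2 := by positivity
    have h3 : Real.exp (ρ * (t - 1)) / C₁ ^ 2 * (ρ * euclNorm (S t *ᵥ x) ^ 2)
        ≤ euclNorm x ^ 2 := by
      rw [euclNorm_sq, euclNorm_sq]
      exact (mul_le_mul_of_nonneg_left h2 hc.le).trans h1
    have h4 : euclNorm (S t *ᵥ x) ≤
        C₁ * Real.exp (ρ / 2) * (1 / Real.sqrt ρ) * Real.exp (-(ρ * t) / 2) * euclNorm x := by
      refine (sq_le_sq₀ (euclNorm_nonneg _) (by positivity)).1 ?_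
      have he : Real.exp (ρ / 2) ^ 2 * Real.exp (-(ρ * t) / 2) ^ 2 *
          Real.exp (ρ * (t - 1)) = 1 := by
        rw [← Real.exp_nat_mul, ← Real.exp_nat_mul, ← Real.exp_add, ← Real.exp_add,
          Real.exp_eq_one_iff]
        push_cast
        ring
      have hk : 0 ≤ C₁ ^ 2 / ρ * (Real.exp (ρ / 2) ^ 2 * Real.exp (-(ρ * t) / 2) ^ 2) := by
        positivity
      calc euclNorm (S t *ᵥ x) ^ 2
          = Real.exp (ρ / 2) ^ 2 * Real.exp (-(ρ * t) / 2) ^ 2 * Real.exp (ρ * (t - 1)) *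
              euclNorm (S t *ᵥ x) ^ 2 := by rw [he, one_mul]
        _ = C₁ ^ 2 / ρ * (Real.exp (ρ / 2) ^ 2 * Real.exp (-(ρ * t) / 2) ^ 2) *
            (Real.exp (ρ * (t - 1)) / C₁ ^ 2 * (ρ * euclNorm (S t *ᵥ x) ^ 2)) := by
          field_simp
        _ ≤ C₁ ^ 2 / ρ * (Real.exp (ρ / 2) ^ 2 * Real.exp (-(ρ * t) / 2) ^ 2) *
            euclNorm x ^ 2 := mul_le_mul_of_nonneg_left h3 hk
        _ = _ := by
          simp only [mul_pow, div_pow, Real.sq_sqrt hρ.le]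
          ring
    refine h4.trans ?_
    gcongr
    linarith
end

section
/- Let n ≥ 1 and h ∈ ℝ. Let R : ℝ → Mat_n(ℝ) be continuous, and let U, S : ℝ → Mat_n(ℝ) be continuously differentiable with U(t) and S(t) symmetric for all t, satisfying the Riccati equations U'(t) + U(t)² + R(t) = 0 and S'(t) + S(t)² + R(t) = 0 for all t ∈ ℝ, such that tr U(t) = h and tr S(t) = −h for all t ∈ ℝ, and U(t) − S(t) is positive semidefinite for all t ∈ ℝ. Then the function t ↦ det(U(t) − S(t)) is constant on ℝ. -/
open Matrix MeasureTheory Set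

/-!
Write `D = U - S` and `H = -(U + S)/2`. Subtracting the Riccati equations gives
`D' = S² - U² = H D + D H`, and `tr H = 0`. Jacobi's formula `(det D)' = tr (adj D · D')`
together with `adj D · D = D · adj D = det D · 1` yields `(det D)' = 2 det D · tr H = 0`.
Working with the adjugate rather than the inverse treats singular and invertible `D` at once.
-/

/-- Jacobi's formula for the derivative of the determinant of a curve of matrices. -/
theorem hasDerivAt_det_of_entries {n : ℕ} {D : ℝ → Matrix (Fin n) (Fin n) ℝ}
    {D' : Matrix (Fin n) (Fin n) ℝ} {t : ℝ}
    (hD : ∀ i j, HasDerivAt (fun τ => D τ i j) (D' i j) t) :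
    HasDerivAt (fun τ => (D τ).det) ((D t).adjugate * D').trace t := by
  -- Cramer's rule: the trace sums the determinants with one column replaced by that of `D'`.
  have htrace : ((D t).adjugate * D').trace
      = ∑ i, ((D t).updateCol i (fun k => D' k i)).det := by
    refine Finset.sum_congr rfl fun i _ => ?_
    rw [← Matrix.cramer_apply, Matrix.cramer_eq_adjugate_mulVec]
    rfl
  have hexpand : ((D t).adjugate * D').trace
      = ∑ σ : Equiv.Perm (Fin n), ((Equiv.Perm.sign σ : ℤ) : ℝ) *
          ∑ i, (∏ j ∈ Finset.univ.erase i, D t (σ j) j) • D' (σ i) i := by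
    rw [htrace]
    simp_rw [Matrix.det_apply', Finset.mul_sum]
    rw [Finset.sum_comm]
    refine Finset.sum_congr rfl fun σ _ => Finset.sum_congr rfl fun i _ => ?_
    rw [← Finset.prod_erase_mul _ _ (Finset.mem_univ i), Matrix.updateCol_self, smul_eq_mul]
    congr 2
    refine Finset.prod_congr rfl fun j hj => ?_
    rw [Matrix.updateCol_ne (Finset.ne_of_mem_erase hj)]
  rw [hexpand]
  simp_rw [Matrix.det_apply']
  exact HasDerivAt.fun_sum fun σ _ =>
    (HasDerivAt.fun_finsetProd fun i _ => hD (σ i) i).const_mul _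

/-- matrix form of Proposition 3.2: if the symmetric matrices
`U(t)`, `S(t)` solve the Riccati equations `U' + U² + R = 0`, `S' + S² + R = 0`
with `tr U(t) = h`, `tr S(t) = −h` and `U(t) − S(t)` positive semidefinite,
then `t ↦ det(U(t) − S(t))` is constant. -/
theorem det_D_constant_along_flow (n : ℕ) (hn : 1 ≤ n) (h : ℝ)
    (R U U' S S' : ℝ → Matrix (Fin n) (Fin n) ℝ)
    -- R is continuous
    (hRcont : ∀ i j, Continuous fun t => R t i j)
    -- U(t) and S(t) are symmetric
    (hUsymm : ∀ t : ℝ, (U t).IsSymm) (hSsymm : ∀ t : ℝ, (S t).IsSymm)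
    -- U and S are continuously differentiable with derivatives U', S'
    (hU' : ∀ (t : ℝ) (i j), HasDerivAt (fun τ => U τ i j) (U' t i j) t)
    (hU'cont : ∀ i j, Continuous fun t => U' t i j)
    (hS' : ∀ (t : ℝ) (i j), HasDerivAt (fun τ => S τ i j) (S' t i j) t)
    (hS'cont : ∀ i j, Continuous fun t => S' t i j)
    -- the Riccati equations
    (hURic : ∀ t : ℝ, U' t + U t * U t + R t = 0)
    (hSRic : ∀ t : ℝ, S' t + S t * S t + R t = 0)
    -- the trace conditions
    (htrU : ∀ t : ℝ, (U t).trace = h) (htrS : ∀ t : ℝ, (S t).trace = -h)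
    -- U(t) − S(t) is positive semidefinite
    (hpos : ∀ t : ℝ, (U t - S t).PosSemidef) :
    ∀ t₁ t₂ : ℝ, (U t₁ - S t₁).det = (U t₂ - S t₂).det := by
  have hderiv : ∀ t, HasDerivAt (fun τ => (U τ - S τ).det) 0 t := by
    intro t
    have hJ := hasDerivAt_det_of_entries (D := fun τ => U τ - S τ) (D' := U' t - S' t) (t := t)
      fun i j => (hU' t i j).sub (hS' t i j)
    have hD' : (2 : ℝ) • (U' t - S' t)
        = -((U t + S t) * (U t - S t) + (U t - S t) * (U t + S t)) := by
      have hU2 : U' t = -(U t * U t) - R t := by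
        rw [← sub_eq_zero, ← hURic t]; abel
      have hS2 : S' t = -(S t * S t) - R t := by
        rw [← sub_eq_zero, ← hSRic t]; abel
      rw [hU2, hS2, two_smul]
      noncomm_ring
    have htr : (U t + S t).trace = 0 := by
      rw [Matrix.trace_add, htrU, htrS, add_neg_cancel]
    have hzero : ((U t - S t).adjugate * (U' t - S' t)).trace = 0 := by
      have h2 : (2 : ℝ) * ((U t - S t).adjugate * (U' t - S' t)).trace = 0 := by
        rw [← smul_eq_mul, ← Matrix.trace_smul, ← Matrix.mul_smul, hD', Matrix.mul_neg,
          Matrix.mul_add, Matrix.trace_neg, Matrix.trace_add,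
          Matrix.trace_mul_comm _ ((U t + S t) * (U t - S t)), Matrix.mul_assoc,
          Matrix.mul_adjugate, ← Matrix.mul_assoc, Matrix.adjugate_mul]
        rw [Matrix.mul_smul, Matrix.mul_one, Matrix.smul_mul, Matrix.one_mul, Matrix.trace_smul,
          htr, smul_zero, add_zero, neg_zero]
      simpa using h2
    rwa [hzero] at hJ
  exact is_const_of_deriv_eq_zero (fun t => (hderiv t).differentiableAt)
    fun t => (hderiv t).deriv
end

section
/- Let n ≥ 1 and r > 0. Let R : [0,1] × [0,r] → Mat_n(ℝ) be continuously differentiable with R(s,t) symmetric for every (s,t), and let S : [0,1] × [0,r] → Mat_n(ℝ) be twice continuously differentiable such that for every s ∈ [0,1]: ∂ₜ²S(s,t) + R(s,t)·S(s,t) = 0 for all t ∈ [0,r], S(s,0) = Id, and S(s,r) = 0. Assume there are continuous functions b : [0,r] → ℝ and g : [0,1] → ℝ with ‖S(s,t)‖ ≤ b(t) and ‖∂ₛR(s,t)‖ ≤ g(s) for all (s,t) ∈ [0,1] × [0,r]. Then ‖∂ₜS(1,0) − ∂ₜS(0,0)‖ ≤ (∫₀ʳ b(t)² dt) · (∫₀¹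 g(s) ds). -/
/-!
For two parameter values `σ`, `s` the Wronskian `W = S(σ)ᵀ S'(s) - S'(σ)ᵀ S(s)` of two solutions of
Jacobi equations satisfies, by symmetry of `R(σ)`, `W' = -S(σ)ᵀ (R(s) - R(σ)) S(s)`, and the
boundary conditions give `W(r) = 0` and `W(0) = S'(s,0) - S'(σ,0)ᵀ`.

Taking `s = σ` shows that `S'(σ,0)` is symmetric. Taking `σ = 0`, `s = 1` then yields
`S'(1,0) - S'(0,0) = ∫₀ʳ S(0,t)ᵀ (R(1,t) - R(0,t)) S(1,t) dt`,
whose integrand has norm at most `b(t)² ∫₀¹ g`. This finite-difference form needs no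
`s`-derivative of `S`.
-/

open Matrix MeasureTheory Set

open scoped Matrix.Norms.L2Operator

/-- A mean value inequality in integral form. -/
lemma norm_sub_le_integral_of_hasDerivWithinAt {E : Type*} [NormedAddCommGroup E]
    [NormedSpace ℝ E] [CompleteSpace E] {a b : ℝ} (hab : a ≤ b) {F F' : ℝ → E} {B : ℝ → ℝ}
    (hF : ∀ t ∈ Icc a b, HasDerivWithinAt F (F' t) (Icc a b) t)
    (hF' : ContinuousOn F' (Icc a b)) (hB : ContinuousOn B (Icc a b))
    (hle : ∀ t ∈ Icc a b, ‖F' t‖ ≤ B t) :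
    ‖F b - F a‖ ≤ ∫ t in a..b, B t := by
  have h := intervalIntegral.integral_eq_sub_of_hasDerivAt_of_le hab
    (fun t ht => (hF t ht).continuousWithinAt)
    (fun t ht => (hF t (Ioo_subset_Icc_self ht)).hasDerivAt (Icc_mem_nhds ht.1 ht.2))
    (hF'.intervalIntegrable_of_Icc hab)
  rw [← h]
  exact intervalIntegral.norm_integral_le_of_norm_le hab
    (Filter.Eventually.of_forall fun t ht => hle t (Ioc_subset_Icc_self ht))
    (hB.intervalIntegrable_of_Icc hab)

/-- Entrywise derivatives give a derivative for the `ℓ²` operator norm. -/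
lemma hasDerivWithinAt_matrix {n : ℕ} {F : ℝ → Matrix (Fin n) (Fin n) ℝ}
    {F' : Matrix (Fin n) (Fin n) ℝ} {s : Set ℝ} {t : ℝ}
    (h : ∀ i j, HasDerivWithinAt (fun τ => F τ i j) (F' i j) s t) :
    HasDerivWithinAt F F' s t := by
  have key : ∀ A : Matrix (Fin n) (Fin n) ℝ,
      A = ∑ i, ∑ j, A i j • Matrix.single i j (1 : ℝ) := by
    intro A
    conv_lhs => rw [Matrix.matrix_eq_sum_single A]
    simp [Matrix.smul_single]
  rw [key F', show F = fun τ => ∑ i, ∑ j, F τ i j • Matrix.single i j (1 : ℝ) from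
    funext fun τ => key (F τ)]
  exact HasDerivWithinAt.fun_sum fun i _ => HasDerivWithinAt.fun_sum fun j _ =>
    (h i j).smul_const _

lemma continuousOn_matrix {X : Type*} [TopologicalSpace X] {n : ℕ}
    {F : X → Matrix (Fin n) (Fin n) ℝ} {s : Set X}
    (h : ∀ i j, ContinuousOn (fun x => F x i j) s) : ContinuousOn F s :=
  continuousOn_pi.2 fun i => continuousOn_pi.2 fun j => h i j

lemma l2_opNorm_transpose {n : ℕ} (A : Matrix (Fin n) (Fin n) ℝ) : ‖Aᵀ‖ = ‖A‖ := by
  rw [← Matrix.conjTranspose_eq_transpose_of_trivial, Matrix.l2_opNorm_conjTranspose]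

/-- The derivative of the Wronskian of two solutions of Jacobi equations with coefficients `P`
(symmetric) and `Q`. -/
lemma hasDerivWithinAt_wronskian {n : ℕ} {U U' V V' : ℝ → Matrix (Fin n) (Fin n) ℝ}
    {P Q U'' V'' : Matrix (Fin n) (Fin n) ℝ} {I : Set ℝ} {t : ℝ} (hP : P.IsSymm)
    (hU : ∀ i j, HasDerivWithinAt (fun τ => U τ i j) (U' t i j) I t)
    (hU' : ∀ i j, HasDerivWithinAt (fun τ => U' τ i j) (U'' i j) I t)
    (hV : ∀ i j, HasDerivWithinAt (fun τ => V τ i j) (V' t i j) I t)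
    (hV' : ∀ i j, HasDerivWithinAt (fun τ => V' τ i j) (V'' i j) I t)
    (hUJ : U'' + P * U t = 0) (hVJ : V'' + Q * V t = 0) :
    HasDerivWithinAt (fun τ => (U τ)ᵀ * V' τ - (U' τ)ᵀ * V τ)
      (-((U t)ᵀ * (Q - P) * V t)) I t := by
  have dU : HasDerivWithinAt (fun τ => (U τ)ᵀ) (U' t)ᵀ I t :=
    hasDerivWithinAt_matrix fun i j => hU j i
  have dU' : HasDerivWithinAt (fun τ => (U' τ)ᵀ) U''ᵀ I t :=
    hasDerivWithinAt_matrix fun i j => hU' j i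
  have h := (dU.mul (hasDerivWithinAt_matrix hV')).sub (dU'.mul (hasDerivWithinAt_matrix hV))
  refine h.congr_deriv ?_
  rw [eq_neg_of_add_eq_zero_left hUJ, eq_neg_of_add_eq_zero_left hVJ, Matrix.transpose_neg,
    Matrix.transpose_mul, hP.eq]
  noncomm_ring

/-- matrix form of the estimate underlying Theorem 2.9:
under the hypotheses of the stable Hopf formula, if `‖S(s,t)‖ ≤ b(t)` and
`‖∂ₛR(s,t)‖ ≤ g(s)` for continuous `b`, `g`, then
`‖∂ₜS(1,0) − ∂ₜS(0,0)‖ ≤ (∫₀ʳ b(t)² dt)·(∫₀¹ g(s) ds)`. -/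
theorem second_fundamental_form_difference_bound (n : ℕ) (hn : 1 ≤ n)
    (r : ℝ) (hr : 0 < r)
    (R S St Stt Rs : ℝ → ℝ → Matrix (Fin n) (Fin n) ℝ)
    -- R is continuously differentiable on [0,1] × [0,r], with s-partial Rs
    (hR_cd : ∀ i j, ContDiffOn ℝ 1 (fun p : ℝ × ℝ => R p.1 p.2 i j)
      (Icc 0 1 ×ˢ Icc 0 r))
    (hRs : ∀ s ∈ Icc (0:ℝ) 1, ∀ t ∈ Icc (0:ℝ) r, ∀ i j,
      HasDerivWithinAt (fun σ => R σ t i j) (Rs s t i j) (Icc 0 1) s)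
    (hRs_cont : ∀ i j, ContinuousOn (fun p : ℝ × ℝ => Rs p.1 p.2 i j)
      (Icc 0 1 ×ˢ Icc 0 r))
    -- R(s,t) is symmetric
    (hR_symm : ∀ s ∈ Icc (0:ℝ) 1, ∀ t ∈ Icc (0:ℝ) r, (R s t).IsSymm)
    -- S is twice continuously differentiable on [0,1] × [0,r],
    -- with first and second t-partials St and Stt
    (hS_cd : ∀ i j, ContDiffOn ℝ 2 (fun p : ℝ × ℝ => S p.1 p.2 i j)
      (Icc 0 1 ×ˢ Icc 0 r))
    (hSt : ∀ s ∈ Icc (0:ℝ) 1, ∀ t ∈ Icc (0:ℝ) r, ∀ i j,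
      HasDerivWithinAt (fun τ => S s τ i j) (St s t i j) (Icc 0 r) t)
    (hStt : ∀ s ∈ Icc (0:ℝ) 1, ∀ t ∈ Icc (0:ℝ) r, ∀ i j,
      HasDerivWithinAt (fun τ => St s τ i j) (Stt s t i j) (Icc 0 r) t)
    -- the Jacobi equation and the boundary conditions
    (hJac : ∀ s ∈ Icc (0:ℝ) 1, ∀ t ∈ Icc (0:ℝ) r, Stt s t + R s t * S s t = 0)
    (hS0 : ∀ s ∈ Icc (0:ℝ) 1, S s 0 = 1)
    (hSr : ∀ s ∈ Icc (0:ℝ) 1, S s r = 0)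
    -- the bounds ‖S(s,t)‖ ≤ b(t) and ‖∂ₛR(s,t)‖ ≤ g(s)
    (b g : ℝ → ℝ)
    (hb_cont : ContinuousOn b (Icc 0 r)) (hg_cont : ContinuousOn g (Icc 0 1))
    (hSb : ∀ s ∈ Icc (0:ℝ) 1, ∀ t ∈ Icc (0:ℝ) r, opNorm (S s t) ≤ b t)
    (hRg : ∀ s ∈ Icc (0:ℝ) 1, ∀ t ∈ Icc (0:ℝ) r, opNorm (Rs s t) ≤ g s) :
    opNorm (St 1 0 - St 0 0)
      ≤ (∫ t in (0:ℝ)..r, b t ^ 2) * ∫ s in (0:ℝ)..1, g s := by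
  have norm_eq : ∀ A : Matrix (Fin n) (Fin n) ℝ, opNorm A = ‖A‖ := fun A =>
    (Matrix.l2_opNorm_def A).symm
  simp only [norm_eq] at hSb hRg ⊢
  have z01 : (0 : ℝ) ∈ Icc (0 : ℝ) 1 := ⟨le_rfl, zero_le_one⟩
  have o01 : (1 : ℝ) ∈ Icc (0 : ℝ) 1 := ⟨zero_le_one, le_rfl⟩
  have sliceT : ∀ s ∈ Icc (0 : ℝ) 1, MapsTo (fun t : ℝ => (s, t)) (Icc 0 r)
      (Icc (0 : ℝ) 1 ×ˢ Icc 0 r) := fun s hs t ht => ⟨hs, ht⟩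
  have contR : ∀ s ∈ Icc (0 : ℝ) 1, ContinuousOn (fun t => R s t) (Icc 0 r) := fun s hs =>
    continuousOn_matrix fun i j => (hR_cd i j).continuousOn.comp (by fun_prop) (sliceT s hs)
  have contS : ∀ s ∈ Icc (0 : ℝ) 1, ContinuousOn (fun t => S s t) (Icc 0 r) := fun s hs =>
    continuousOn_matrix fun i j => (hS_cd i j).continuousOn.comp (by fun_prop) (sliceT s hs)
  have contST : ∀ s ∈ Icc (0 : ℝ) 1, ContinuousOn (fun t => (S s t)ᵀ) (Icc 0 r) := fun s hs =>
    continuousOn_matrix fun i j => (hS_cd j i).continuousOn.comp (by fun_prop) (sliceT s hs)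
  have hRdiff : ∀ t ∈ Icc (0 : ℝ) r, ‖R 1 t - R 0 t‖ ≤ ∫ s in (0 : ℝ)..1, g s := fun t ht =>
    norm_sub_le_integral_of_hasDerivWithinAt (F := fun s => R s t) (F' := fun s => Rs s t)
      zero_le_one
      (fun s hs => hasDerivWithinAt_matrix (hRs s hs t ht))
      (continuousOn_matrix fun i j => (hRs_cont i j).comp (f := fun s : ℝ => (s, t))
        (by fun_prop) fun s hs => ⟨hs, ht⟩)
      hg_cont (fun s hs => hRg s hs t ht)
  have wronskian_bound : ∀ σ ∈ Icc (0 : ℝ) 1, ∀ s ∈ Icc (0 : ℝ) 1, ∀ K : ℝ,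
      (∀ t ∈ Icc (0 : ℝ) r, ‖R s t - R σ t‖ ≤ K) →
      ‖St s 0 - (St σ 0)ᵀ‖ ≤ ∫ t in (0 : ℝ)..r, b t ^ 2 * K := by
    intro σ hσ s hs K hK
    have h := norm_sub_le_integral_of_hasDerivWithinAt hr.le
      (F := fun t => (S σ t)ᵀ * St s t - (St σ t)ᵀ * S s t)
      (F' := fun t => -((S σ t)ᵀ * (R s t - R σ t) * S s t)) (B := fun t => b t ^ 2 * K)
      (fun t ht => hasDerivWithinAt_wronskian (hR_symm σ hσ t ht) (hSt σ hσ t ht)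
        (hStt σ hσ t ht) (hSt s hs t ht) (hStt s hs t ht) (hJac σ hσ t ht) (hJac s hs t ht))
      (((contST σ hσ).mul ((contR s hs).sub (contR σ hσ))).mul (contS s hs)).neg
      ((hb_cont.pow 2).mul continuousOn_const) ?_
    · simpa [hS0 σ hσ, hS0 s hs, hSr σ hσ, hSr s hs, norm_sub_rev] using h
    · intro t ht
      have hb0 : 0 ≤ b t := (norm_nonneg _).trans (hSb s hs t ht)
      calc ‖-((S σ t)ᵀ * (R s t - R σ t) * S s t)‖
          ≤ ‖(S σ t)ᵀ‖ * ‖R s t - R σ t‖ * ‖S s t‖ := by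
            rw [norm_neg]
            exact (norm_mul_le _ _).trans
              (mul_le_mul_of_nonneg_right (norm_mul_le _ _) (norm_nonneg _))
        _ ≤ b t * K * b t := by
            rw [l2_opNorm_transpose]
            have hK0 : 0 ≤ K := (norm_nonneg _).trans (hK t ht)
            gcongr
            exacts [hSb σ hσ t ht, hK t ht, hSb s hs t ht]
        _ = b t ^ 2 * K := by ring
  have symm0 : St 0 0 = (St 0 0)ᵀ := by
    have h := wronskian_bound 0 z01 0 z01 0 (by simp)
    simpa [sub_eq_zero] using h
  have h := wronskian_bound 0 z01 1 o01 _ hRdiff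
  rwa [← symm0, intervalIntegral.integral_mul_const] at h
end
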